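/- arXiv:1904.09055 — 6 statements merged into one kernel-verified Lean document; each statement's English description precedes it below -/
import Mathlib

section
/- Let {A_k, f_k} and {B_ℓ, g_ℓ} be two Cauchy inverse systems of cochain complexes of R-modules with limits A_∞ and B_∞ respectively. Let z : ℕ → ℕ be a nondecreasing function with z(ℓ) → ∞ as ℓ → ∞, and suppose given chain maps F_ℓ : B_ℓ → A_{z(ℓ)} that commute with the system maps, i.e. for every ℓ one has F_ℓ ∘ g_ℓ = f_{z(ℓ)} ∘ f_{z(ℓ)+1} ∘ ⋯ ∘ f_{z(ℓ+1)−1} ∘ F_{ℓ+1} (the middle composite being the identity when z(ℓ+1) = z(ℓ)). If |F_ℓ|_h → ∞ as ℓ → ∞, then A_∞ and B_∞ are chain homotopy equivalent. -/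
/-!
Work in the homotopy category `K`. If the cones `D k` of the maps `L ⟶ A k` vanish in any given
degree for large `k`, then each of the groups of cochains `X ⟶ D k` is eventually zero in every
bidegree, so that `1 - shift` is bijective on their product. This descends to `K`: the towers
`Hom(X, D k)` have neither `lim` nor `lim¹`. Hence any family of maps `X ⟶ A k`, compatible up to
homotopy, lifts to a map `X ⟶ L`.

Applied to `B∞ ⟶ B ℓ ⟶ A (z ℓ)`, this gives a map `B∞ ⟶ A∞`. Maps of large homological order
induce bijections on maps from a complex concentrated in a fixed degree, so by two-out-of-three
`B∞ ⟶ A∞` does so in all degrees. It is an isomorphism in `K`: such complexes detect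
contractibility, since the inclusion of the cycles `ker d` of `Y` is itself a map into `Y`.
-/

open CategoryTheory CategoryTheory.Limits

/-- Cochain complexes of `R`-modules, with differential of degree `+1`. -/
abbrev Cx (R : Type) [Ring R] := CochainComplex (ModuleCat R) ℤ

variable {R : Type} [Ring R]

/-- `homOrderGE f d` says that the homological order `|f|_h` is at least `d`:
there is a complex `C`, chain homotopy equivalent to the mapping cone of `f`,
which vanishes in all degrees `< d`. -/
def homOrderGE {A B : Cx R} (f : A ⟶ B) (d : ℤ) : Prop :=
  ∃ C : Cx R, Nonempty (HomotopyEquiv (CochainComplex.mappingCone f) C) ∧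
    ∀ i : ℤ, i < d → IsZero (C.X i)

/-- An inverse system `{A_k, f_k}` is Cauchy if `|f_k|_h → ∞` as `k → ∞`. -/
def IsCauchySystem (A : ℕ → Cx R) (f : ∀ k : ℕ, A (k + 1) ⟶ A k) : Prop :=
  ∀ d : ℤ, ∃ N : ℕ, ∀ k : ℕ, N ≤ k → homOrderGE (f k) d

/-- `(L, ft)` is a limit of the inverse system `{A_k, f_k}`:
the maps `ft k : L ⟶ A k` are compatible with the system maps and
`|ft k|_h → ∞` as `k → ∞`. -/
def IsSystemLimit (A : ℕ → Cx R) (f : ∀ k : ℕ, A (k + 1) ⟶ A k)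
    (L : Cx R) (ft : ∀ k : ℕ, L ⟶ A k) : Prop :=
  (∀ k : ℕ, ft (k + 1) ≫ f k = ft k) ∧
  (∀ d : ℤ, ∃ N : ℕ, ∀ k : ℕ, N ≤ k → homOrderGE (ft k) d)

/-- The composite transition map `A b ⟶ A a` of an inverse system,
`f_a ∘ f_{a+1} ∘ ⋯ ∘ f_{b-1}` (the identity when `a = b`). -/
def transMap (A : ℕ → Cx R) (f : ∀ k : ℕ, A (k + 1) ⟶ A k) (a : ℕ) :
    ∀ b : ℕ, a ≤ b → (A b ⟶ A a)
  | 0, h => eqToHom (by rw [Nat.le_zero.mp h])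
  | b + 1, h =>
    if hab : a = b + 1 then eqToHom (by rw [hab])
    else f b ≫ transMap A f a b (by omega)

open Filter Opposite Pretriangulated CochainComplex.HomComplex
open HomotopyCategory (quotient)

section Tower

variable {G : ℕ → Type*} [∀ k, AddCommGroup (G k)]

/-- The map `w ↦ (w k - γ k (w (k + 1)))` attached to a tower of abelian groups; its kernel and
cokernel are `lim` and `lim¹` of the tower. -/
def oneSubShift (γ : ∀ k, G (k + 1) →+ G k) : (∀ k, G k) →+ ∀ k, G k where
  toFun w k := w k - γ k (w (k + 1))
  map_zero' := by ext; simp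
  map_add' v w := by ext; simp only [Pi.add_apply, map_add]; abel

@[simp]
lemma oneSubShift_apply (γ : ∀ k, G (k + 1) →+ G k) (w : ∀ k, G k) (k : ℕ) :
    oneSubShift γ w k = w k - γ k (w (k + 1)) := rfl

lemma oneSubShift_bijective_of_subsingleton_ge (N : ℕ) (γ : ∀ k, G (k + 1) →+ G k)
    (hG : ∀ k ≥ N, Subsingleton (G k)) : Function.Bijective (oneSubShift γ) := by
  induction N generalizing G with
  | zero =>
    have : ∀ k, Subsingleton (G k) := fun k => hG k k.zero_le
    exact ⟨Function.injective_of_subsingleton _, Function.surjective_to_subsingleton _⟩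
  | succ N ih =>
    obtain ⟨inj, surj⟩ := ih (fun k => γ (k + 1)) fun k hk => hG (k + 1) (by lia)
    refine ⟨(injective_iff_map_eq_zero _).2 fun w hw => ?_, fun z => ?_⟩
    · have tail : ∀ k, w (k + 1) = 0 := congrFun <|
        (injective_iff_map_eq_zero _).1 inj _ (funext fun k => congrFun hw (k + 1))
      funext k
      cases k with
      | zero => simpa [tail 0] using congrFun hw 0
      | succ k => exact tail k
    · obtain ⟨w, hw⟩ := surj fun k => z (k + 1)
      refine ⟨fun k => Nat.casesOn k (z 0 + γ 0 (w 0)) w, funext fun k => ?_⟩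
      cases k with
      | zero => simp
      | succ k => exact congrFun hw k

lemma oneSubShift_bijective (γ : ∀ k, G (k + 1) →+ G k)
    (hG : ∀ᶠ k in atTop, Subsingleton (G k)) : Function.Bijective (oneSubShift γ) :=
  let ⟨N, hN⟩ := eventually_atTop.1 hG
  oneSubShift_bijective_of_subsingleton_ge N γ hN

/-- For every inverse system with terms `D k`, the groups `lim` and `lim¹` of `Hom(X, D k)` vanish,
for all objects `X`. -/
def IsLimAcyclic {T : Type*} [Category T] [Preadditive T] (D : ℕ → T) : Prop :=
  ∀ (γ : ∀ k, D (k + 1) ⟶ D k) (X : T), Function.Bijective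
    (oneSubShift (G := fun k => X ⟶ D k) fun k => Preadditive.rightComp X (γ k))

end Tower

section Cochain

variable {C : Type*} [Category C] [Preadditive C]

lemma quotient_hom_eq_zero (K L : CochainComplex C ℤ) (m n : ℤ) [K.IsStrictlyLE m]
    [L.IsStrictlyGE n] (hmn : m < n := by lia)
    (u : (quotient C (.up ℤ)).obj K ⟶ (quotient C (.up ℤ)).obj L) : u = 0 := by
  obtain ⟨u, rfl⟩ := (quotient C (.up ℤ)).map_surjective u
  have : u = 0 := by
    ext i
    rcases lt_or_ge m i with hi | hi
    · exact (K.isZero_of_isStrictlyLE m i).eq_of_src _ _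
    · exact (L.isZero_of_isStrictlyGE n i).eq_of_tgt _ _
  rw [this, Functor.map_zero]

/-- Postcomposition with a chain map, as a homomorphism between groups of cochains. -/
def postcompCochain (X : CochainComplex C ℤ) {K L : CochainComplex C ℤ} (f : K ⟶ L) (n : ℤ) :
    Cochain X K n →+ Cochain X L n where
  toFun w := w.comp (Cochain.ofHom f) (add_zero n)
  map_zero' := Cochain.zero_comp _ _
  map_add' v w := Cochain.add_comp v w _ _

@[simp]
lemma postcompCochain_apply {X K L : CochainComplex C ℤ} (f : K ⟶ L) {n : ℤ} (w : Cochain X K n) :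
    postcompCochain X f n w = w.comp (Cochain.ofHom f) (add_zero n) := rfl

variable {D : ℕ → CochainComplex C ℤ}

lemma oneSubShift_postcompCochain_bijective (γ : ∀ k, D (k + 1) ⟶ D k)
    (hD : ∀ i, ∀ᶠ k in atTop, IsZero ((D k).X i)) (X : CochainComplex C ℤ) (n : ℤ) :
    Function.Bijective (oneSubShift (G := fun k => Cochain X (D k) n)
      fun k => postcompCochain X (γ k) n) := by
  have degreewise (p q : ℤ) : Function.Bijective
      (oneSubShift (G := fun k => X.X p ⟶ (D k).X q)
        fun k => Preadditive.rightComp (X.X p) ((γ k).f q)) :=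
    oneSubShift_bijective _ <| (hD q).mono fun k hk => ⟨hk.eq_of_tgt⟩
  refine ⟨(injective_iff_map_eq_zero _).2 fun w hw => ?_, fun z => ?_⟩
  · funext k
    ext p q hpq
    refine congrFun ((injective_iff_map_eq_zero _).1 (degreewise p q).1
      (fun k => (w k).v p q hpq) (funext fun k => ?_)) k
    simpa using! Cochain.congr_v (congrFun hw k) p q hpq
  · choose w hw using fun p q hpq => (degreewise p q).2 fun k => (z k).v p q hpq
    refine ⟨fun k => Cochain.mk fun p q hpq => w p q hpq k, funext fun k => ?_⟩
    ext p q hpq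
    simpa using! congrFun (hw p q hpq) k

lemma δ_oneSubShift_postcompCochain {X : CochainComplex C ℤ} (γ : ∀ k, D (k + 1) ⟶ D k) {n : ℤ}
    (w : ∀ k, Cochain X (D k) n) (m : ℤ) (k : ℕ) :
    δ n m (oneSubShift (G := fun k => Cochain X (D k) n)
        (fun k => postcompCochain X (γ k) n) w k) =
      oneSubShift (G := fun k => Cochain X (D k) m)
        (fun k => postcompCochain X (γ k) m) (fun k => δ n m (w k)) k := by
  simp [δ_sub, δ_comp_ofHom]

variable (γ : ∀ k, (quotient C (.up ℤ)).obj (D (k + 1)) ⟶ (quotient C (.up ℤ)).obj (D k))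
  (hD : ∀ i, ∀ᶠ k in atTop, IsZero ((D k).X i))
include hD

lemma oneSubShift_rightComp_quotient_injective (X : HomotopyCategory C (.up ℤ)) :
    Function.Injective (oneSubShift (G := fun k => X ⟶ (quotient C (.up ℤ)).obj (D k))
      fun k => Preadditive.rightComp X (γ k)) := by
  obtain ⟨X, rfl⟩ := X.quotient_obj_surjective
  choose γ hγ using fun k => (quotient C (.up ℤ)).map_surjective (γ k)
  obtain rfl := funext hγ
  refine (injective_iff_map_eq_zero _).2 fun c hc => ?_
  choose c hc' using fun k => (quotient C (.up ℤ)).map_surjective (c k)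
  obtain rfl := funext hc'
  have homotopies (k : ℕ) : Homotopy (c k - c (k + 1) ≫ γ k) 0 :=
    HomotopyCategory.homotopyOfEq _ _ (by simpa [Preadditive.rightComp] using congrFun hc k)
  have boundary (k : ℕ) : ∃ z : Cochain X (D k) (-1),
      δ (-1) 0 z = Cochain.ofHom (c k - c (k + 1) ≫ γ k) :=
    let ⟨z, hz⟩ := Cochain.equivHomotopy _ _ (homotopies k)
    ⟨z, by simpa using hz.symm⟩
  choose z hz using boundary
  obtain ⟨w, hw⟩ := (oneSubShift_postcompCochain_bijective γ hD X (-1)).2 z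
  have null : (fun k => Cochain.ofHom (c k)) = fun k => δ (-1) 0 (w k) := by
    refine (oneSubShift_postcompCochain_bijective γ hD X 0).1 (funext fun k => ?_)
    rw [← δ_oneSubShift_postcompCochain, hw, hz]
    simp [Cochain.ofHom_sub, Cochain.ofHom_comp]
  funext k
  have : Homotopy (c k) 0 :=
    (Cochain.equivHomotopy _ _).symm ⟨w k, by simpa using congrFun null k⟩
  simpa using HomotopyCategory.eq_of_homotopy _ _ this

lemma oneSubShift_rightComp_quotient_surjective (X : HomotopyCategory C (.up ℤ)) :
    Function.Surjective (oneSubShift (G := fun k => X ⟶ (quotient C (.up ℤ)).obj (D k))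
      fun k => Preadditive.rightComp X (γ k)) := by
  obtain ⟨X, rfl⟩ := X.quotient_obj_surjective
  choose γ hγ using fun k => (quotient C (.up ℤ)).map_surjective (γ k)
  obtain rfl := funext hγ
  intro e
  choose e he using fun k => (quotient C (.up ℤ)).map_surjective (e k)
  obtain rfl := funext he
  obtain ⟨w, hw⟩ := (oneSubShift_postcompCochain_bijective γ hD X 0).2 fun k => Cochain.ofHom (e k)
  have cocycle : (fun k => δ 0 1 (w k)) = 0 := by
    refine (injective_iff_map_eq_zero _).1
      (oneSubShift_postcompCochain_bijective γ hD X 1).1 _ (funext fun k => ?_)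
    rw [← δ_oneSubShift_postcompCochain, hw, δ_ofHom]
    rfl
  let e' (k : ℕ) : X ⟶ D k := Cocycle.homOf (Cocycle.mk (w k) 1 (zero_add 1) (congrFun cocycle k))
  refine ⟨fun k => (quotient C (.up ℤ)).map (e' k), funext fun k => ?_⟩
  have : e' k - e' (k + 1) ≫ γ k = e k := Cochain.ofHom_injective <| by
    simpa [e', Cochain.ofHom_sub, Cochain.ofHom_comp] using congrFun hw k
  simp [← this, Preadditive.rightComp]

lemma isLimAcyclic_quotient_obj : IsLimAcyclic fun k => (quotient C (.up ℤ)).obj (D k) :=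
  fun γ X => ⟨oneSubShift_rightComp_quotient_injective γ hD X,
    oneSubShift_rightComp_quotient_surjective γ hD X⟩

end Cochain

section Pretriangulated

variable {T : Type*} [Category T] [Preadditive T] [HasZeroObject T] [HasShift T ℤ]
  [∀ n : ℤ, (shiftFunctor T n).Additive] [Pretriangulated T]

section Lift

variable {L : T} {A D : ℕ → T} {t : ∀ k, L ⟶ A k} {a : ∀ k, A k ⟶ D k} {b : ∀ k, D k ⟶ L⟦(1 : ℤ)⟧}

lemma exists_comp_eq_of_isLimAcyclic (hT : ∀ k, Triangle.mk (t k) (a k) (b k) ∈ distTriang T)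
    (hD : IsLimAcyclic D) {γ : ∀ k, D (k + 1) ⟶ D k} (hγ : ∀ k, b (k + 1) = γ k ≫ b k)
    {X : T} (l : ℕ → (X ⟶ L)) (hl : ∀ k, l (k + 1) ≫ t k = l k ≫ t k) :
    ∃ m : X ⟶ L, ∀ k, m ≫ t k = l k ≫ t k := by
  have differences (k : ℕ) : ∃ e, (l k - l (k + 1))⟦(1 : ℤ)⟧' = e ≫ b k := by
    have : (l k - l (k + 1))⟦(1 : ℤ)⟧' ≫ (t k)⟦(1 : ℤ)⟧' = 0 := by
      rw [← Functor.map_comp, Preadditive.sub_comp, hl, sub_self, Functor.map_zero]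
    exact Triangle.coyoneda_exact₁ _ (hT k) _ this
  choose e he using differences
  obtain ⟨e', he'⟩ := (hD γ _).2 e
  -- The correction terms are killed by `t k`, and they make all the lifts `l k` equal.
  let m (k : ℕ) : X⟦(1 : ℤ)⟧ ⟶ L⟦(1 : ℤ)⟧ := (l k)⟦(1 : ℤ)⟧' - e' k ≫ b k
  have constant (k : ℕ) : m k = m 0 := by
    induction k with
    | zero => rfl
    | succ k ih =>
      have : (l k)⟦(1 : ℤ)⟧' - (l (k + 1))⟦(1 : ℤ)⟧' = e' k ≫ b k - e' (k + 1) ≫ b (k + 1) := by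
        simpa [← he', Preadditive.rightComp, ← hγ] using he k
      rw [← ih, eq_comm]
      exact sub_eq_sub_iff_sub_eq_sub.2 this
  obtain ⟨m₀, hm₀⟩ := (shiftFunctor T (1 : ℤ)).map_surjective (m 0)
  refine ⟨m₀, fun k => (shiftFunctor T (1 : ℤ)).map_injective ?_⟩
  have : b k ≫ (t k)⟦(1 : ℤ)⟧' = 0 := comp_distTriang_mor_zero₃₁ _ (hT k)
  simp [hm₀, ← constant k, m, this]

end Lift

lemma nonempty_cone_hom_of_isLimAcyclic {A : ℕᵒᵖ ⥤ T} (c : Cone A) {D : ℕ → T} (hD : IsLimAcyclic D)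
    {a : ∀ k, A.obj (op k) ⟶ D k} {b : ∀ k, D k ⟶ c.pt⟦(1 : ℤ)⟧}
    (hT : ∀ k, Triangle.mk (c.π.app (op k)) (a k) (b k) ∈ distTriang T) (s : Cone A) :
    Nonempty (s ⟶ c) := by
  let f (k : ℕ) : A.obj (op (k + 1)) ⟶ A.obj (op k) := A.map (homOfLE (k.le_add_right 1)).op
  have connecting (k : ℕ) : ∃ γ, a (k + 1) ≫ γ = f k ≫ a k ∧
      b (k + 1) ≫ (𝟙 c.pt)⟦(1 : ℤ)⟧' = γ ≫ b k :=
    complete_distinguished_triangle_morphism _ _ (hT (k + 1)) (hT k) (𝟙 c.pt) (f k)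
      ((c.w _).trans (Category.id_comp _).symm)
  choose γ hγa hγb using connecting
  have obstruction : (fun k => s.π.app (op k) ≫ a k) = 0 := by
    refine (injective_iff_map_eq_zero _).1 (hD γ s.pt).1 _ (funext fun k => ?_)
    simp [Preadditive.rightComp, hγa, f]
  have lifts (k : ℕ) : ∃ l : s.pt ⟶ c.pt, s.π.app (op k) = l ≫ c.π.app (op k) :=
    Triangle.coyoneda_exact₂ _ (hT k) _ (congrFun obstruction k)
  choose l hl using lifts
  obtain ⟨m, hm⟩ := exists_comp_eq_of_isLimAcyclic hT hD (γ := γ)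
    (fun k => by simpa using hγb k) l fun k => by
      rw [← hl k, ← c.w (homOfLE (k.le_add_right 1)).op, ← Category.assoc, ← hl (k + 1), s.w]
  exact ⟨{ hom := m, w := fun k => (hm k.unop).trans (hl k.unop).symm }⟩

end Pretriangulated

section Distinguished

variable {T : Type*} [Category T] [Preadditive T] [HasZeroObject T] [HasShift T ℤ]
  [∀ n : ℤ, (shiftFunctor T n).Additive] [Pretriangulated T]
  {X Y Z W W' : T} {f : X ⟶ Y} {g : Y ⟶ Z} {h : Z ⟶ X⟦(1 : ℤ)⟧}

lemma bijective_comp_of_distTriang (hT : Triangle.mk f g h ∈ distTriang T) (e : W⟦(1 : ℤ)⟧ ≅ W')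
    (hW : ∀ u : W ⟶ Z, u = 0) (hW' : ∀ u : W' ⟶ Z, u = 0) :
    Function.Bijective fun u : W ⟶ X => u ≫ f := by
  refine ⟨(injective_iff_map_eq_zero (Preadditive.rightComp W f)).2 fun u hu => ?_, fun v => ?_⟩
  · have hu' : u⟦(1 : ℤ)⟧' ≫ f⟦(1 : ℤ)⟧' = 0 := by
      rw [← Functor.map_comp]
      exact (congrArg _ hu).trans (Functor.map_zero _ _ _)
    obtain ⟨w, hw⟩ : ∃ w : W⟦(1 : ℤ)⟧ ⟶ Z, u⟦(1 : ℤ)⟧' = w ≫ h :=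
      Triangle.coyoneda_exact₁ _ hT _ hu'
    have : w = 0 := by rw [← cancel_epi e.inv, hW' (e.inv ≫ w), comp_zero]
    exact (Functor.map_eq_zero_iff _).1 (by rw [hw, this, zero_comp])
  · obtain ⟨u, hu⟩ := Triangle.coyoneda_exact₂ _ hT v (hW _)
    exact ⟨u, hu.symm⟩

lemma hom_eq_zero_of_distTriang (hT : Triangle.mk f g h ∈ distTriang T) (e : W⟦(1 : ℤ)⟧ ≅ W')
    (hW : Function.Injective fun u : W ⟶ X => u ≫ f)
    (hW' : Function.Surjective fun u : W' ⟶ X => u ≫ f) (u : W' ⟶ Z) : u = 0 := by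
  have huh : u ≫ h = 0 := by
    obtain ⟨v, hv⟩ := (shiftFunctor T (1 : ℤ)).map_surjective (e.hom ≫ u ≫ h)
    have hhf : h ≫ f⟦(1 : ℤ)⟧' = 0 := comp_distTriang_mor_zero₃₁ _ hT
    have : v = 0 := hW <| (shiftFunctor T (1 : ℤ)).map_injective <| by simp [hv, hhf]
    rw [← cancel_epi e.hom, ← hv, this, Functor.map_zero, comp_zero]
  obtain ⟨v, rfl⟩ : ∃ v : W' ⟶ Y, u = v ≫ g := Triangle.coyoneda_exact₃ _ hT u huh
  obtain ⟨w, rfl⟩ := hW' v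
  have : f ≫ g = 0 := comp_distTriang_mor_zero₁₂ _ hT
  simp [this]

end Distinguished

section Detection

variable {C : Type*} [Category C] [Preadditive C]

lemma nonempty_homotopy_id_zero_of_kernel_sections [HasKernels C] (Y : CochainComplex C ℤ)
    (hY : ∀ i j, i + 1 = j → ∃ s : kernel (Y.d j (j + 1)) ⟶ Y.X i,
      s ≫ Y.d i j = kernel.ι (Y.d j (j + 1))) :
    Nonempty (Homotopy (𝟙 Y) 0) := by
  choose s hs using hY
  let r (i j : ℤ) : Y.X i ⟶ kernel (Y.d j (j + 1)) :=
    kernel.lift _ (Y.d i j) (Y.d_comp_d _ _ _)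
  have hr (i j : ℤ) : r i j ≫ kernel.ι _ = Y.d i j := kernel.lift_ι _ _ _
  -- The sections split `Y`: `p` is a projection onto the cycles, and `p ≫ s` is the contraction.
  let p (i : ℤ) : Y.X i ⟶ kernel (Y.d i (i + 1)) :=
    kernel.lift _ (𝟙 _ - r i (i + 1) ≫ s i (i + 1) rfl) (by simp [hs, hr])
  have hp (i : ℤ) : p i ≫ kernel.ι _ = 𝟙 _ - r i (i + 1) ≫ s i (i + 1) rfl := kernel.lift_ι _ _ _
  have d_comp_p (i j : ℤ) : Y.d i j ≫ p j = r i j := by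
    have : Y.d i j ≫ r j (j + 1) = 0 := by simp [← cancel_mono (kernel.ι _), hr]
    simp [← cancel_mono (kernel.ι _), hp, hr, reassoc_of% this]
  refine ⟨(Cochain.equivHomotopy _ _).symm
    ⟨Cochain.mk fun i j hij => p i ≫ s j i (by lia), ?_⟩⟩
  ext i
  rw [Cochain.ofHom_zero, add_zero, δ_v (-1) 0 rfl _ i i (add_zero i) (i - 1) (i + 1) rfl rfl]
  simp [hs, hp, reassoc_of% d_comp_p]

variable [HasZeroObject C]

lemma exists_comp_d_eq_of_forall_single_hom_eq_zero {Y : CochainComplex C ℤ} {Z : C} {i j : ℤ}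
    (hij : i + 1 = j)
    (hY : ∀ u : (HomotopyCategory.singleFunctor C j).obj Z ⟶ (quotient C (.up ℤ)).obj Y, u = 0)
    (f : Z ⟶ Y.X j) (hf : f ≫ Y.d j (j + 1) = 0) : ∃ s : Z ⟶ Y.X i, s ≫ Y.d i j = f := by
  have cocycle (k : ℤ) (hk : (ComplexShape.up ℤ).Rel j k) : f ≫ Y.d j k = 0 := by
    obtain rfl : j + 1 = k := hk
    exact hf
  obtain ⟨h⟩ := (HomotopyCategory.quotient_map_eq_zero_iff
    (HomologicalComplex.mkHomFromSingle f cocycle)).1 (hY _)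
  have null : (HomologicalComplex.mkHomFromSingle f cocycle).f j = h.hom j i ≫ Y.d i j := by
    simpa [prevD_eq _ (show (ComplexShape.up ℤ).Rel i j from hij),
      dNext_eq _ (show (ComplexShape.up ℤ).Rel j (j + 1) from rfl)] using h.comm j
  exact ⟨(HomologicalComplex.singleObjXSelf _ j Z).inv ≫ h.hom j i, by simp [← null]⟩

lemma isZero_of_forall_single_hom_eq_zero [HasKernels C] (Y : HomotopyCategory C (.up ℤ))
    (hY : ∀ n Z (u : (HomotopyCategory.singleFunctor C n).obj Z ⟶ Y), u = 0) : IsZero Y := by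
  obtain ⟨Y, rfl⟩ := Y.quotient_obj_surjective
  rw [HomotopyCategory.isZero_quotient_obj_iff]
  exact nonempty_homotopy_id_zero_of_kernel_sections Y fun i j hij =>
    exists_comp_d_eq_of_forall_single_hom_eq_zero hij (hY j _) _ (kernel.condition _)

lemma isDetecting_singleFunctor_obj [HasBinaryBiproducts C] [HasKernels C] :
    (ObjectProperty.ofObj fun p : ℤ × C =>
      (HomotopyCategory.singleFunctor C p.1).obj p.2).IsDetecting := by
  intro X Y φ hφ
  obtain ⟨D, a, b, hT⟩ := distinguished_cocone_triangle φ
  have bij (n : ℤ) (Z : C) : Function.Bijective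
      fun u : (HomotopyCategory.singleFunctor C n).obj Z ⟶ X => u ≫ φ :=
    (Function.bijective_iff_existsUnique _).2 (hφ _ (ObjectProperty.ofObj_apply _ (n, Z)))
  refine (Triangle.isZero₃_iff_isIso₁ _ hT).1 (isZero_of_forall_single_hom_eq_zero _ fun n Z => ?_)
  exact hom_eq_zero_of_distTriang hT
    (((HomotopyCategory.singleFunctors C).shiftIso 1 n (n + 1) (by lia)).app Z)
    (bij (n + 1) Z).1 (bij n Z).2

end Detection

section Order

variable {C : Type*} [Category C] [Preadditive C] [HasZeroObject C] [HasBinaryBiproducts C]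

/-- The morphisms of homological order at least `n` in the homotopy category: those with a cone
represented by a complex which vanishes in degrees `< n`. -/
def orderGE (n : ℤ) : MorphismProperty (HomotopyCategory C (.up ℤ)) :=
  (ObjectProperty.strictMap (fun K : CochainComplex C ℤ => K.IsStrictlyGE n) (quotient _ _)).trW

/-- The homological orders of the morphisms `φ k` tend to `∞` with `k`. -/
def OrderTendsToTop {X Y : ℕ → HomotopyCategory C (.up ℤ)} (φ : ∀ k, X k ⟶ Y k) : Prop :=
  ∀ n, ∀ᶠ k in atTop, orderGE n (φ k)

lemma orderGE.bijective_comp {X Y : HomotopyCategory C (.up ℤ)} {φ : X ⟶ Y} {m n : ℤ}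
    (hφ : orderGE n φ) (hmn : m < n) (W : CochainComplex C ℤ) [W.IsStrictlyLE m] :
    Function.Bijective fun u : (quotient C (.up ℤ)).obj W ⟶ X => u ≫ φ := by
  obtain ⟨_, a, b, hT, ⟨D, hD⟩⟩ := hφ
  have : (W⟦(1 : ℤ)⟧).IsStrictlyLE (m - 1) := W.isStrictlyLE_shift m _ _ (by lia)
  exact bijective_comp_of_distTriang hT (((quotient C (.up ℤ)).commShiftIso (1 : ℤ)).app W).symm
    (quotient_hom_eq_zero W D m n) (quotient_hom_eq_zero (W⟦(1 : ℤ)⟧) D (m - 1) n)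

variable {A : ℕᵒᵖ ⥤ HomotopyCategory C (.up ℤ)}

lemma nonempty_cone_hom_of_orderGE_self {c : Cone A} (hc : ∀ k : ℕ, orderGE k (c.π.app (op k)))
    (s : Cone A) : Nonempty (s ⟶ c) := by
  choose Z a b hT hZ using hc
  choose D hD hDZ using fun k => (ObjectProperty.strictMap_iff _ _ _).1 (hZ k)
  obtain rfl := funext hDZ
  refine nonempty_cone_hom_of_isLimAcyclic c (isLimAcyclic_quotient_obj fun i => ?_) hT s
  filter_upwards [eventually_gt_atTop i.toNat] with k hk
  have := hD k
  exact (D k).isZero_of_isStrictlyGE k i (by lia)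

lemma OrderTendsToTop.nonempty_cone_hom {c : Cone A}
    (hc : OrderTendsToTop fun k => c.π.app (op k)) (s : Cone A) : Nonempty (s ⟶ c) := by
  -- Along a subsequence every map has a cone that is bounded below.
  obtain ⟨φ, hφ, hcφ⟩ := extraction_forall_of_eventually fun k : ℕ => hc k
  let Φ := hφ.monotone.functor.op
  obtain ⟨l⟩ := nonempty_cone_hom_of_orderGE_self (c := c.whisker Φ) hcφ (s.whisker Φ)
  refine ⟨{ hom := l.hom, w := fun ⟨k⟩ => ?_ }⟩
  rw [← c.w (homOfLE (hφ.le_apply (x := k))).op, ← s.w (homOfLE (hφ.le_apply (x := k))).op]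
  exact (Category.assoc _ _ _).symm.trans (congrArg (· ≫ _) (l.w (op k)))

lemma OrderTendsToTop.eventually_bijective_comp {X Y : ℕ → HomotopyCategory C (.up ℤ)}
    {φ : ∀ k, X k ⟶ Y k} (hφ : OrderTendsToTop φ) (n : ℤ) (Z : C) : ∀ᶠ k in atTop,
      Function.Bijective fun u : (HomotopyCategory.singleFunctor C n).obj Z ⟶ X k => u ≫ φ k :=
  (hφ (n + 1)).mono fun _ hk =>
    hk.bijective_comp (lt_add_one n) ((CochainComplex.singleFunctor C n).obj Z)

lemma isIso_cone_hom_of_eventually_bijective_comp [HasKernels C] {c s : Cone A}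
    (hc : OrderTendsToTop fun k => c.π.app (op k))
    (hs : ∀ n Z, ∀ᶠ k in atTop, Function.Bijective
      fun u : (HomotopyCategory.singleFunctor C n).obj Z ⟶ s.pt => u ≫ s.π.app (op k))
    (l : s ⟶ c) : IsIso l.hom := by
  refine isDetecting_singleFunctor_obj _ ?_
  rintro _ ⟨n, Z⟩
  refine (Function.bijective_iff_existsUnique _).1 ?_
  obtain ⟨k, hck, hsk⟩ := ((hc.eventually_bijective_comp n Z).and (hs n Z)).exists
  refine (Function.Bijective.of_comp_iff' hck _).1 ?_
  convert hsk using 1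
  funext u
  simp

theorem compare_inverse_systems_general [HasKernels C] {A B : ℕᵒᵖ ⥤ HomotopyCategory C (.up ℤ)}
    {a : Cone A} (ha : OrderTendsToTop fun k => a.π.app (op k))
    {b : Cone B} (hb : OrderTendsToTop fun k => b.π.app (op k))
    {z : ℕ → ℕ} (hz : Monotone z) (hztop : Tendsto z atTop atTop)
    (F : B ⟶ hz.functor.op ⋙ A) (hF : OrderTendsToTop fun k => F.app (op k)) :
    Nonempty (a.pt ≅ b.pt) := by
  let a' := a.whisker hz.functor.op
  let b' := (Cone.postcompose F).obj b
  have ha' : OrderTendsToTop fun k => a'.π.app (op k) := fun n => hztop.eventually (ha n)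
  obtain ⟨l⟩ := ha'.nonempty_cone_hom b'
  have := isIso_cone_hom_of_eventually_bijective_comp ha' (fun n Z => ?_) l
  · exact ⟨(asIso l.hom).symm⟩
  · filter_upwards [hb.eventually_bijective_comp n Z, hF.eventually_bijective_comp n Z] with k h₁ h₂
    exact (congrArg Function.Bijective (funext fun u => Category.assoc u _ _)).mp (h₂.comp h₁)

end Order

section System

lemma homOrderGE.orderGE {A B : Cx R} {f : A ⟶ B} {d : ℤ} (hf : homOrderGE f d) :
    orderGE d ((quotient _ (.up ℤ)).map f) := by
  obtain ⟨D, ⟨e⟩, hD⟩ := hf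
  have : D.IsStrictlyGE d := (CochainComplex.isStrictlyGE_iff _ _).2 hD
  rw [_root_.orderGE, ← ObjectProperty.trW_isoClosure]
  exact ⟨_, _, _, HomotopyCategory.mappingCone_triangleh_distinguished f, _,
    ⟨D, this⟩, ⟨HomotopyCategory.isoOfHomotopyEquiv e⟩⟩

lemma orderTendsToTop_of_homOrderGE {A B : ℕ → Cx R} {φ : ∀ k, A k ⟶ B k}
    (hφ : ∀ d, ∃ N, ∀ k, N ≤ k → homOrderGE (φ k) d) :
    OrderTendsToTop fun k => (quotient _ _).map (φ k) :=
  fun d => (eventually_atTop.2 (hφ d)).mono fun _ hk => hk.orderGE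

variable {A : ℕ → Cx R} {f : ∀ k, A (k + 1) ⟶ A k}

lemma transMap_self (a : ℕ) : transMap A f a a le_rfl = 𝟙 (A a) := by
  cases a <;> simp [transMap]

lemma transMap_succ {a b : ℕ} (h : a ≤ b) :
    transMap A f a (b + 1) (h.trans b.le_succ) = f b ≫ transMap A f a b h := by
  rw [transMap, dif_neg (by lia)]

variable (A f) in
/-- The functor to the homotopy category attached to an inverse system of complexes. -/
noncomputable def systemFunctor : ℕᵒᵖ ⥤ HomotopyCategory (ModuleCat R) (.up ℤ) :=
  Functor.ofOpSequence fun k => (quotient _ _).map (f k)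

lemma systemFunctor_map_succ (k : ℕ) :
    (systemFunctor A f).map (homOfLE (k.le_add_right 1)).op = (quotient _ _).map (f k) :=
  Functor.ofOpSequence_map_homOfLE_succ _ k

lemma systemFunctor_map {a b : ℕ} (h : a ≤ b) :
    (systemFunctor A f).map (homOfLE h).op = (quotient _ _).map (transMap A f a b h) := by
  induction b, h using Nat.le_induction with
  | base =>
    rw [transMap_self]
    exact ((systemFunctor A f).map_id _).trans ((quotient _ _).map_id _).symm
  | succ b h ih =>
    rw [transMap_succ h, Functor.map_comp, ← ih, ← systemFunctor_map_succ]
    exact (systemFunctor A f).map_comp _ _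

/-- The cone over `systemFunctor A f` given by maps compatible with the system maps. -/
noncomputable def systemCone {L : Cx R} (ft : ∀ k, L ⟶ A k) (hft : ∀ k, ft (k + 1) ≫ f k = ft k) :
    Cone (systemFunctor A f) where
  pt := (quotient _ _).obj L
  π := NatTrans.ofOpSequence (fun k => (quotient _ _).map (ft k)) fun k => by
    rw [systemFunctor_map_succ]
    calc 𝟙 _ ≫ (quotient _ _).map (ft k) = (quotient _ _).map (ft (k + 1)) ≫
          (quotient _ _).map (f k) := by rw [Category.id_comp, ← Functor.map_comp, hft]

/-- The natural transformation induced in the homotopy category by maps `B ℓ ⟶ A (z ℓ)` which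
commute with the system maps. -/
noncomputable def systemHom {B : ℕ → Cx R} {g : ∀ ℓ, B (ℓ + 1) ⟶ B ℓ} {z : ℕ → ℕ} (hz : Monotone z)
    (F : ∀ ℓ, B ℓ ⟶ A (z ℓ)) (hF : ∀ ℓ, g ℓ ≫ F ℓ =
      F (ℓ + 1) ≫ transMap A f (z ℓ) (z (ℓ + 1)) (hz (Nat.le_succ ℓ))) :
    systemFunctor B g ⟶ hz.functor.op ⋙ systemFunctor A f :=
  NatTrans.ofOpSequence (fun ℓ => (quotient _ _).map (F ℓ)) fun ℓ => by
    rw [systemFunctor_map_succ]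
    calc (quotient _ _).map (g ℓ) ≫ (quotient _ _).map (F ℓ)
        = (quotient _ _).map (F (ℓ + 1)) ≫ (quotient _ _).map (transMap A f _ _ _) := by
          rw [← Functor.map_comp, hF, Functor.map_comp]
      _ = _ := congrArg (_ ≫ ·) (systemFunctor_map (hz (Nat.le_succ ℓ))).symm

end System

/-- Proposition 2.13 of [MWGI].  If `{A_k, f_k}` and `{B_ℓ, g_ℓ}` are
Cauchy inverse systems of cochain complexes of `R`-modules with limits `A∞`, `B∞`,
`z : ℕ → ℕ` is nondecreasing with `z(ℓ) → ∞`, and `F_ℓ : B_ℓ ⟶ A_{z(ℓ)}` are chain maps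
commuting with the system maps, with `|F_ℓ|_h → ∞`, then `A∞ ≃ B∞`. -/
theorem compare_inverse_systems
    (A : ℕ → Cx R) (f : ∀ k : ℕ, A (k + 1) ⟶ A k)
    (B : ℕ → Cx R) (g : ∀ ℓ : ℕ, B (ℓ + 1) ⟶ B ℓ)
    (hA : IsCauchySystem A f) (hB : IsCauchySystem B g)
    (Ainf : Cx R) (ft : ∀ k : ℕ, Ainf ⟶ A k) (hAlim : IsSystemLimit A f Ainf ft)
    (Binf : Cx R) (gt : ∀ ℓ : ℕ, Binf ⟶ B ℓ) (hBlim : IsSystemLimit B g Binf gt)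
    (z : ℕ → ℕ) (hz : Monotone z) (hztop : Filter.Tendsto z Filter.atTop Filter.atTop)
    (F : ∀ ℓ : ℕ, B ℓ ⟶ A (z ℓ))
    (hcomm : ∀ ℓ : ℕ, g ℓ ≫ F ℓ = F (ℓ + 1) ≫ transMap A f (z ℓ) (z (ℓ + 1)) (hz (Nat.le_succ ℓ)))
    (hF : ∀ d : ℤ, ∃ N : ℕ, ∀ ℓ : ℕ, N ≤ ℓ → homOrderGE (F ℓ) d) :
    Nonempty (HomotopyEquiv Ainf Binf) :=
  (compare_inverse_systems_general (a := systemCone ft hAlim.1)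
    (orderTendsToTop_of_homOrderGE hAlim.2) (b := systemCone gt hBlim.1)
    (orderTendsToTop_of_homOrderGE hBlim.2) hz hztop (systemHom hz F hcomm)
    (orderTendsToTop_of_homOrderGE hF)).map HomotopyCategory.homotopyEquivOfIso
end

section
/- If f : A → B and g : B → C are chain maps of cochain complexes of R-modules, then the homological order of the composite satisfies |g ∘ f|_h ≥ min(|f|_h, |g|_h). -/
open CategoryTheory CategoryTheory.Limits

variable {R : Type} [Ring R]

/-!
By the octahedral axiom, the mapping cones of `f`, `f ≫ g` and `g` form a distinguished triangle in
the homotopy category. It therefore suffices that the complexes which are homotopy equivalent to one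
vanishing below degree `n` are closed under extensions. In a distinguished triangle
`X ⟶ Y ⟶ Z ⟶ X⟦1⟧`, the object `Y` is a cone of `Z⟦-1⟧ ⟶ X`. When `X` and `Z` are represented by
complexes vanishing below degree `n`, this morphism is represented by a chain map, whose mapping
cone is `Z ⊕ X` in each degree.
-/

section HomotopyCategory

open Pretriangulated

universe v u

variable (V : Type u) [Category.{v} V] [Preadditive V]

/-- The objects of the homotopy category that are represented, up to isomorphism, by a cochain
complex vanishing in degrees `< n`. Applied to a mapping cone, this is the lower bound `n` for the
homological order. The essential image, unlike the strict one, is closed under isomorphisms. -/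
def homotopyGE (n : ℤ) : ObjectProperty (HomotopyCategory V (ComplexShape.up ℤ)) :=
  ObjectProperty.map (fun K : CochainComplex V ℤ ↦ K.IsStrictlyGE n) (HomotopyCategory.quotient _ _)

variable {V}

instance (n : ℤ) : (homotopyGE V n).IsClosedUnderIsomorphisms := by
  unfold homotopyGE
  infer_instance

lemma homotopyGE_quotient_obj_iff (K : CochainComplex V ℤ) (n : ℤ) :
    homotopyGE V n ((HomotopyCategory.quotient _ _).obj K) ↔
      ∃ L : CochainComplex V ℤ, Nonempty (HomotopyEquiv K L) ∧ ∀ i < n, IsZero (L.X i) := by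
  constructor
  · rintro ⟨L, hL, ⟨e⟩⟩
    exact ⟨L, ⟨HomotopyCategory.homotopyEquivOfIso e.symm⟩,
      fun i hi ↦ L.isZero_of_isStrictlyGE n i hi⟩
  · rintro ⟨L, ⟨e⟩, hL⟩
    exact ⟨L, (L.isStrictlyGE_iff n).2 hL, ⟨(HomotopyCategory.isoOfHomotopyEquiv e).symm⟩⟩

lemma homotopyGE_shift {X : HomotopyCategory V (ComplexShape.up ℤ)} {n : ℤ}
    (hX : homotopyGE V n X) (a n' : ℤ) (h : a + n' = n) :
    homotopyGE V n' (X⟦a⟧) := by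
  obtain ⟨K, hK, ⟨e⟩⟩ := hX
  exact ⟨K⟦a⟧, K.isStrictlyGE_shift n a n' h,
    ⟨((HomotopyCategory.quotient _ _).commShiftIso a).app K ≪≫ (shiftFunctor _ a).mapIso e⟩⟩

variable [HasZeroObject V] [HasBinaryBiproducts V]

lemma homotopyGE_obj₃_of_distTriang {T : Triangle (HomotopyCategory V (ComplexShape.up ℤ))}
    (hT : T ∈ distTriang _) {n : ℤ} (h₁ : homotopyGE V (n + 1) T.obj₁)
    (h₂ : homotopyGE V n T.obj₂) : homotopyGE V n T.obj₃ := by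
  obtain ⟨K, _, ⟨e₁⟩⟩ := h₁
  obtain ⟨L, _, ⟨e₂⟩⟩ := h₂
  obtain ⟨φ, hφ⟩ := (HomotopyCategory.quotient _ _).map_surjective (e₁.hom ≫ T.mor₁ ≫ e₂.inv)
  have comm : (HomotopyCategory.quotient _ _).map φ ≫ e₂.hom = e₁.hom ≫ T.mor₁ := by
    simp [hφ]
  let e := isoTriangleOfIso₁₂ _ T (HomotopyCategory.mappingCone_triangleh_distinguished φ) hT
    e₁ e₂ comm
  exact ⟨CochainComplex.mappingCone φ, CochainComplex.isStrictlyGE_mappingCone φ (n + 1) n n,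
    ⟨Triangle.π₃.mapIso e⟩⟩

instance (n : ℤ) : (homotopyGE V n).IsTriangulatedClosed₂ :=
  .mk' fun _ hT h₁ h₃ ↦ homotopyGE_obj₃_of_distTriang (inv_rot_of_distTriang _ hT)
    (homotopyGE_shift h₃ (-1) (n + 1) (by lia)) h₁

theorem homOrder_comp_general {A B C : CochainComplex V ℤ} (f : A ⟶ B) (g : B ⟶ C) (d : ℤ)
    (hf : homotopyGE V d ((HomotopyCategory.quotient _ _).obj (CochainComplex.mappingCone f)))
    (hg : homotopyGE V d ((HomotopyCategory.quotient _ _).obj (CochainComplex.mappingCone g))) :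
    homotopyGE V d ((HomotopyCategory.quotient _ _).obj (CochainComplex.mappingCone (f ≫ g))) :=
  (homotopyGE V d).ext_of_isTriangulatedClosed₂ _
    (HomotopyCategory.mappingConeCompTriangleh_distinguished f g) hf hg

end HomotopyCategory

/-- For chain maps `f : A ⟶ B` and `g : B ⟶ C` of cochain complexes of
`R`-modules, the homological order of the composite satisfies
`|g ∘ f|_h ≥ min(|f|_h, |g|_h)`: any integer bounding both orders from below also bounds
the order of the composite. -/
theorem homOrder_comp {A B C : Cx R} (f : A ⟶ B) (g : B ⟶ C) (d : ℤ)
    (hf : homOrderGE f d) (hg : homOrderGE g d) :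
    homOrderGE (f ≫ g) d := by
  rw [homOrderGE, ← homotopyGE_quotient_obj_iff] at hf hg ⊢
  exact homOrder_comp_general f g d hf hg
end

section
/- Limits of inverse systems of cochain complexes are unique up to chain homotopy equivalence: if A_∞ (with structure maps f̃_k) and A'_∞ (with structure maps f̃'_k) are both limits of the same inverse system {A_k, f_k} of cochain complexes of R-modules, then A_∞ and A'_∞ are chain homotopy equivalent. -/
open CategoryTheory CategoryTheory.Limits

variable {R : Type} [Ring R]

/-!
A limit of an inverse system is its homotopy limit. Let `S` be the endomorphism
`(x_k) ↦ (f_k x_{k+1})` of `∏ A_k`. If `L` is a limit, then `L ⟶ ∏ A_k` and `1 - S` are the first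
two maps of a distinguished triangle of the homotopy category. As `1 - S` does not involve `L` and
the second map of a triangle determines its first object up to isomorphism, `L` is unique.

The triangle is compared with the one of the constant system `L`, which comes from the split exact
sequence `L ⟶ ∏ L ⟶ ∏ L`. The octahedral axiom reduces the claim to `1 - σ` being invertible up to
homotopy on `∏ Cone(L ⟶ A_k)`, where `σ` is again the shift. Since `Cone(L ⟶ A_k)` is
homotopically concentrated in degrees that tend to infinity, `σ` is homotopic to a map that is
nilpotent in each degree.
-/

section

open Filter Pretriangulated CochainComplex
open HomotopyCategory (quotient)

section Tower

variable {W : Type*} [Category* W] [HasProductsOfShape ℕ W]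

/-- The endomorphism `(x_k) ↦ (f_k x_{k+1})` of the product of an inverse system. The inverse
limit is the kernel of `𝟙 - towerShift A f`, the homotopy limit its homotopy fibre. -/
noncomputable def towerShift (A : ℕ → W) (f : ∀ k, A (k + 1) ⟶ A k) : ∏ᶜ A ⟶ ∏ᶜ A :=
  Pi.lift fun k => Pi.π A (k + 1) ≫ f k

@[simp]
lemma towerShift_π (A : ℕ → W) (f : ∀ k, A (k + 1) ⟶ A k) (k : ℕ) :
    towerShift A f ≫ Pi.π A k = Pi.π A (k + 1) ≫ f k := by
  simp [towerShift]

variable [Preadditive W]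

lemma lift_comp_id_sub_towerShift {A : ℕ → W} {f : ∀ k, A (k + 1) ⟶ A k} {L : W}
    {ft : ∀ k, L ⟶ A k} (hft : ∀ k, ft (k + 1) ≫ f k = ft k) :
    Pi.lift ft ≫ (𝟙 (∏ᶜ A) - towerShift A f) = 0 := by
  ext k
  simp [hft]

/-- The sequence `L ⟶ ∏ L ⟶ ∏ L` that exhibits `L` as the limit of the constant inverse system. -/
noncomputable abbrev constTowerShortComplex (L : W) : ShortComplex W :=
  .mk (Pi.lift fun _ : ℕ => 𝟙 L) (𝟙 _ - towerShift (fun _ => L) fun _ => 𝟙 L)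
    (lift_comp_id_sub_towerShift fun _ => Category.comp_id _)

/-- The section of `𝟙 - towerShift` is `x ↦ (-∑_{j < k} x_j)_k`. -/
noncomputable def constTowerSplitting (L : W) : (constTowerShortComplex L).Splitting where
  r := Pi.π _ 0
  s := Pi.lift fun k => -∑ j ∈ Finset.range k, Pi.π _ j
  s_g := by
    ext k
    simp [Finset.sum_range_succ]
  id := by
    ext k
    simp only [Preadditive.sub_comp, Category.id_comp, Preadditive.add_comp, Category.assoc,
      limit.lift_π, Fan.mk_pt, Fan.mk_π_app, Category.comp_id, Preadditive.comp_neg,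
      Preadditive.comp_sum, towerShift_π, sub_neg_eq_add]
    rw [neg_add_eq_sub, ← Finset.sum_sub_distrib, Finset.sum_range_sub, add_sub_cancel]

end Tower

lemma isIso_id_sub_of_eventually_eq_zero {W : Type*} [Category* W] [Preadditive W] {Y : W}
    {C : ℕ → W} {p : ∀ k, Y ⟶ C k} (hp : IsLimit (Fan.mk Y p)) {b : ∀ k, C (k + 1) ⟶ C k}
    {w : Y ⟶ Y} (hw : ∀ k, w ≫ p k = p (k + 1) ≫ b k) (hb : ∀ᶠ k in atTop, b k = 0) :
    IsIso (𝟙 Y - w) := by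
  obtain ⟨N, hN⟩ := eventually_atTop.1 hb
  let ω : End Y := w
  have pow_comp_eq_zero (n : ℕ) : ∀ k, N ≤ k + n → (ω ^ (n + 1) : Y ⟶ Y) ≫ p k = 0 := by
    induction n with
    | zero =>
      intro k hk
      simp [ω, hw, hN k hk]
    | succ n ih =>
      intro k hk
      rw [pow_succ', End.mul_def, Category.assoc, hw, reassoc_of% ih (k + 1) (by lia), zero_comp]
  have nilpotent : IsNilpotent ω :=
    ⟨N + 1, Fan.IsLimit.hom_ext hp _ _ fun k => by
      simpa using pow_comp_eq_zero N k (Nat.le_add_left N k)⟩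
  exact (isUnit_iff_isIso (1 - ω)).1 nilpotent.isUnit_one_sub

section HomotopicallyGE

variable {V : Type*} [Category* V] [Preadditive V]

/-- The complex `X` is homotopy equivalent to a complex that vanishes in all degrees `< d`.
The condition `|f|_h ≥ d` says this of the mapping cone of `f`. -/
def IsHomotopicallyGE (X : CochainComplex V ℤ) (d : ℤ) : Prop :=
  ∃ C : CochainComplex V ℤ, Nonempty (HomotopyEquiv X C) ∧ ∀ i < d, IsZero (C.X i)

lemma IsHomotopicallyGE.exists_homotopy_id {X : CochainComplex V ℤ} {d : ℤ}
    (hX : IsHomotopicallyGE X d) :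
    ∃ e : X ⟶ X, Nonempty (Homotopy (𝟙 X) e) ∧ ∀ i < d, e.f i = 0 := by
  obtain ⟨C, ⟨E⟩, hC⟩ := hX
  refine ⟨E.hom ≫ E.inv, ⟨E.homotopyHomInvId.symm⟩, fun i hi => ?_⟩
  rw [HomologicalComplex.comp_f, (hC i hi).eq_of_tgt (E.hom.f i) 0, zero_comp]

/- The bound `b` is there because a contractible `X` is homotopically concentrated in degrees `≥ d`
for every `d`, so that there is no largest `d`. -/
lemma exists_homotopy_id_of_le (X : CochainComplex V ℤ) (b : ℤ) :
    ∃ e : X ⟶ X, Nonempty (Homotopy (𝟙 X) e) ∧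
      ∀ d ≤ b, IsHomotopicallyGE X d → ∀ i < d, e.f i = 0 := by
  by_cases h : ∃ d ≤ b, IsHomotopicallyGE X d
  · obtain ⟨m, ⟨-, hm⟩, le_m⟩ := Int.exists_greatest_of_bdd
      (P := fun d => d ≤ b ∧ IsHomotopicallyGE X d) ⟨b, fun d hd => hd.1⟩ h
    obtain ⟨e, he, e_zero⟩ := hm.exists_homotopy_id
    exact ⟨e, he, fun d hdb hd i hi => e_zero i (hi.trans_le (le_m d ⟨hdb, hd⟩))⟩
  · exact ⟨𝟙 X, ⟨.refl _⟩, fun d hdb hd => (h ⟨d, hdb, hd⟩).elim⟩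

/-- Homotopies into a product of complexes can be given componentwise. -/
noncomputable def homotopyOfFan {κ ι : Type*} {c : ComplexShape κ} [HasProductsOfShape ι V]
    {X Y : HomologicalComplex V c} {C : ι → HomologicalComplex V c} {p : ∀ k, Y ⟶ C k}
    (hp : IsLimit (Fan.mk Y p)) {f g : X ⟶ Y} (h : ∀ k, Homotopy (f ≫ p k) (g ≫ p k)) :
    Homotopy f g := by
  have hp_X (j : κ) : IsLimit (Fan.mk (Y.X j) fun k => (p k).f j) :=
    isLimitFanMkObjOfIsLimit (HomologicalComplex.eval V c j) _ _ hp
  let s (i j) : X.X i ⟶ Y.X j := Fan.IsLimit.lift (hp_X j) fun k => (h k).hom i j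
  have fac (k) : (h k).hom = fun i j => s i j ≫ (p k).f j := by
    ext i j
    exact (Fan.IsLimit.fac (hp_X j) (fun k => (h k).hom i j) k).symm
  exact
    { hom := s
      zero i j hij := Fan.IsLimit.hom_ext (hp_X j) _ _ fun k => by
        simpa [(h k).zero i j hij] using (congr_fun₂ (fac k) i j).symm
      comm i := Fan.IsLimit.hom_ext (hp_X i) _ _ fun k => by
        have comm_k := (h k).comm i
        rw [fac, dNext_comp_right, prevD_comp_right] at comm_k
        simpa using comm_k }

lemma isIso_quotient_map_id_sub_of_isHomotopicallyGE [HasProductsOfShape ℕ V]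
    {C : ℕ → CochainComplex V ℤ} {γ : ∀ k, C (k + 1) ⟶ C k} {Y : CochainComplex V ℤ}
    {p : ∀ k, Y ⟶ C k} (hp : IsLimit (Fan.mk Y p)) {σ : Y ⟶ Y}
    (hσ : ∀ k, σ ≫ p k = p (k + 1) ≫ γ k) (hC : ∀ d, ∀ᶠ k in atTop, IsHomotopicallyGE (C k) d) :
    IsIso ((quotient V (.up ℤ)).map (𝟙 Y - σ)) := by
  choose e he e_zero using fun k : ℕ => exists_homotopy_id_of_le (C k) k
  let ε : Y ⟶ Y := Fan.IsLimit.lift hp fun k => p k ≫ e k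
  have ε_p (k) : ε ≫ p k = p k ≫ e k := Fan.IsLimit.fac hp (fun k => p k ≫ e k) k
  have σε_p (k) : (σ ≫ ε) ≫ p k = p (k + 1) ≫ γ k ≫ e k := by
    rw [Category.assoc, ε_p, reassoc_of% hσ]
  have hε : Homotopy (𝟙 Y) ε := homotopyOfFan hp fun k =>
    ((Homotopy.ofEq (by simp)).trans ((he k).some.compLeft (p k))).trans (.ofEq (ε_p k).symm)
  have isIso_f (i : ℤ) : IsIso ((𝟙 Y - σ ≫ ε).f i) := by
    refine isIso_id_sub_of_eventually_eq_zero (b := fun k => (γ k ≫ e k).f i)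
      (isLimitFanMkObjOfIsLimit (HomologicalComplex.eval V _ i) _ _ hp)
      (fun k => congrArg (fun φ => φ.f i) (σε_p k)) ?_
    filter_upwards [hC (i + 1), eventually_ge_atTop (i + 1).toNat] with k hk hik
    have e_f_zero : (e k).f i = 0 := e_zero k (i + 1) (by lia) hk i (by lia)
    exact (congrArg ((γ k).f i ≫ ·) e_f_zero).trans comp_zero
  have isIso_id_sub : IsIso (𝟙 Y - σ ≫ ε) := HomologicalComplex.Hom.isIso_of_components _
  have quotient_map_eq :
      (quotient V (.up ℤ)).map (𝟙 Y - σ) = (quotient V (.up ℤ)).map (𝟙 Y - σ ≫ ε) := by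
    have quotient_map_ε := HomotopyCategory.eq_of_homotopy _ _ hε
    simp [Functor.map_sub, ← quotient_map_ε]
  rw [quotient_map_eq]
  infer_instance

end HomotopicallyGE

section MappingCone

variable {V : Type*} [Category* V] [Preadditive V] [HasBinaryBiproducts V]
  {X₁ Y₁ X₂ Y₂ K : CochainComplex V ℤ}

lemma mappingCone_hom_ext {φ : X₁ ⟶ Y₁} {u v : mappingCone φ ⟶ K}
    (h_inl : ∀ n : ℤ, (mappingCone.inl φ).v (n + 1) n (by lia) ≫ u.f n =
      (mappingCone.inl φ).v (n + 1) n (by lia) ≫ v.f n)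
    (h_inr : mappingCone.inr φ ≫ u = mappingCone.inr φ ≫ v) : u = v := by
  ext n
  exact (mappingCone.ext_from_iff φ (n + 1) n rfl _ _).2
    ⟨h_inl n, congrArg (fun ψ => ψ.f n) h_inr⟩

section Map

variable (φ₁ : X₁ ⟶ Y₁) (φ₂ : X₂ ⟶ Y₂) (a : X₁ ⟶ X₂) (b : Y₁ ⟶ Y₂) (comm : φ₁ ≫ b = a ≫ φ₂)

lemma mappingCone_inl_v_map_f (n : ℤ) :
    (mappingCone.inl φ₁).v (n + 1) n (by lia) ≫ (mappingCone.map φ₁ φ₂ a b comm).f n =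
      a.f (n + 1) ≫ (mappingCone.inl φ₂).v (n + 1) n (by lia) := by
  simp [mappingCone.map]

lemma mappingCone_inr_map :
    mappingCone.inr φ₁ ≫ mappingCone.map φ₁ φ₂ a b comm = b ≫ mappingCone.inr φ₂ := by
  simp [mappingCone.map]

lemma mappingCone_map_f_fst_v (n : ℤ) :
    (mappingCone.map φ₁ φ₂ a b comm).f n ≫ (mappingCone.fst φ₂).1.v n (n + 1) rfl =
      (mappingCone.fst φ₁).1.v n (n + 1) rfl ≫ a.f (n + 1) := by
  simp [mappingCone.map, mappingCone.ext_from_iff φ₁ (n + 1) n rfl]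

lemma mappingCone_map_f_snd_v (n : ℤ) :
    (mappingCone.map φ₁ φ₂ a b comm).f n ≫ (mappingCone.snd φ₂).v n n (add_zero n) =
      (mappingCone.snd φ₁).v n n (add_zero n) ≫ b.f n := by
  simp [mappingCone.map, mappingCone.ext_from_iff φ₁ (n + 1) n rfl]

end Map

lemma mappingCone_map_id_sub (φ : X₁ ⟶ Y₁) (a : X₁ ⟶ X₁) (b : Y₁ ⟶ Y₁) (comm : φ ≫ b = a ≫ φ) :
    mappingCone.map φ φ (𝟙 X₁ - a) (𝟙 Y₁ - b) (by simp [comm]) =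
      𝟙 (mappingCone φ) - mappingCone.map φ φ a b comm := by
  refine mappingCone_hom_ext (fun n => ?_) ?_
  · simp only [mappingCone_inl_v_map_f, HomologicalComplex.sub_f_apply, HomologicalComplex.id_f,
      Preadditive.comp_sub, Preadditive.sub_comp, Category.id_comp, Category.comp_id]
  · simp [mappingCone_inr_map]

section Fan

variable {ι : Type*} {F G : ι → CochainComplex V ℤ} {p : ∀ k, X₁ ⟶ F k} {q : ∀ k, Y₁ ⟶ G k}
  {φ : X₁ ⟶ Y₁} {ψ : ∀ k, F k ⟶ G k}

/-- In each degree, a mapping cone of products is the product of the mapping cones. -/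
noncomputable def isLimitFanMappingConeX {n : ℤ}
    (hp : IsLimit (Fan.mk (X₁.X (n + 1)) fun k => (p k).f (n + 1)))
    (hq : IsLimit (Fan.mk (Y₁.X n) fun k => (q k).f n)) (comm : ∀ k, φ ≫ q k = p k ≫ ψ k) :
    IsLimit (Fan.mk ((mappingCone φ).X n) fun k =>
      (mappingCone.map φ (ψ k) (p k) (q k) (comm k)).f n) := by
  let lift_p (s : Fan fun k => (mappingCone (ψ k)).X n) : s.pt ⟶ X₁.X (n + 1) :=
    Fan.IsLimit.lift hp fun k => s.proj k ≫ (mappingCone.fst (ψ k)).1.v n (n + 1) rfl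
  let lift_q (s : Fan fun k => (mappingCone (ψ k)).X n) : s.pt ⟶ Y₁.X n :=
    Fan.IsLimit.lift hq fun k => s.proj k ≫ (mappingCone.snd (ψ k)).v n n (add_zero n)
  have lift_p_fac (s : Fan fun k => (mappingCone (ψ k)).X n) (k : ι) :
      lift_p s ≫ (p k).f (n + 1) = s.proj k ≫ (mappingCone.fst (ψ k)).1.v n (n + 1) rfl :=
    Fan.IsLimit.fac hp (fun k => s.proj k ≫ (mappingCone.fst (ψ k)).1.v n (n + 1) rfl) k
  have lift_q_fac (s : Fan fun k => (mappingCone (ψ k)).X n) (k : ι) :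
      lift_q s ≫ (q k).f n = s.proj k ≫ (mappingCone.snd (ψ k)).v n n (add_zero n) :=
    Fan.IsLimit.fac hq (fun k => s.proj k ≫ (mappingCone.snd (ψ k)).v n n (add_zero n)) k
  refine Fan.IsLimit.mk _ (fun s => lift_p s ≫ (mappingCone.inl φ).v (n + 1) n (by lia) +
    lift_q s ≫ (mappingCone.inr φ).f n) (fun s k => ?_) (fun s m hm => ?_)
  · refine (mappingCone.ext_to_iff (ψ k) n (n + 1) rfl _ _).2 ⟨?_, ?_⟩
    · simp [mappingCone_map_f_fst_v, lift_p_fac]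
    · simp [mappingCone_map_f_snd_v, lift_q_fac]
  · refine (mappingCone.ext_to_iff φ n (n + 1) rfl _ _).2 ⟨?_, ?_⟩
    · refine Fan.IsLimit.hom_ext hp _ _ fun k => ?_
      simpa [← hm, mappingCone_map_f_fst_v] using (lift_p_fac s k).symm
    · refine Fan.IsLimit.hom_ext hq _ _ fun k => ?_
      simpa [← hm, mappingCone_map_f_snd_v] using (lift_q_fac s k).symm

/-- The mapping cone of a map between products is the product of the mapping cones. -/
noncomputable def isLimitFanMappingCone [HasProductsOfShape ι V] (hp : IsLimit (Fan.mk X₁ p))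
    (hq : IsLimit (Fan.mk Y₁ q)) (comm : ∀ k, φ ≫ q k = p k ≫ ψ k) :
    IsLimit (Fan.mk (mappingCone φ) fun k => mappingCone.map φ (ψ k) (p k) (q k) (comm k)) :=
  HomologicalComplex.isLimitOfEval _ _ fun n => (isLimitMapConeFanMkEquiv _ _ _).symm
    (isLimitFanMappingConeX
      (isLimitFanMkObjOfIsLimit (HomologicalComplex.eval V _ (n + 1)) _ _ hp)
      (isLimitFanMkObjOfIsLimit (HomologicalComplex.eval V _ n) _ _ hq) comm)

end Fan

/-- The map out of the mapping cone of `φ` induced by a map whose composition with `φ` vanishes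
strictly, not just up to homotopy. -/
noncomputable def descOfCompEqZero (φ : X₁ ⟶ Y₁) (c : Y₁ ⟶ K) (h : φ ≫ c = 0) :
    mappingCone φ ⟶ K :=
  mappingCone.desc φ 0 c (by simp [h])

@[simp]
lemma inr_descOfCompEqZero (φ : X₁ ⟶ Y₁) (c : Y₁ ⟶ K) (h : φ ≫ c = 0) :
    mappingCone.inr φ ≫ descOfCompEqZero φ c h = c := by
  simp [descOfCompEqZero]

@[simp]
lemma inl_v_descOfCompEqZero_f (φ : X₁ ⟶ Y₁) (c : Y₁ ⟶ K) (h : φ ≫ c = 0) (n : ℤ) :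
    (mappingCone.inl φ).v (n + 1) n (by lia) ≫ (descOfCompEqZero φ c h).f n = 0 := by
  simp [descOfCompEqZero]

lemma descOfCompEqZero_comp {K' : CochainComplex V ℤ} {φ : X₁ ⟶ Y₁} {c : Y₁ ⟶ K}
    (h : φ ≫ c = 0) (g : K ⟶ K') :
    descOfCompEqZero φ c h ≫ g =
      descOfCompEqZero φ (c ≫ g) (by rw [reassoc_of% h, zero_comp]) :=
  mappingCone_hom_ext (fun n => by simp [reassoc_of% inl_v_descOfCompEqZero_f])
    (by simp [reassoc_of% inr_descOfCompEqZero])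

lemma map_comp_descOfCompEqZero {φ₁ : X₁ ⟶ Y₁} {φ₂ : X₂ ⟶ Y₂} {a : X₁ ⟶ X₂} {b : Y₁ ⟶ Y₂}
    (comm : φ₁ ≫ b = a ≫ φ₂) {c : Y₂ ⟶ K} (h : φ₂ ≫ c = 0) :
    mappingCone.map φ₁ φ₂ a b comm ≫ descOfCompEqZero φ₂ c h =
      descOfCompEqZero φ₁ (b ≫ c) (by rw [reassoc_of% comm, h, comp_zero]) := by
  refine mappingCone_hom_ext (fun n => ?_) ?_
  · simp [reassoc_of% mappingCone_inl_v_map_f]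
  · simp [reassoc_of% mappingCone_inr_map]

lemma map_eq_descOfCompEqZero {φ₁ : X₁ ⟶ Y₁} {φ₂ : X₂ ⟶ Y₂} {a : X₁ ⟶ X₂} {b : Y₁ ⟶ Y₂}
    (comm : φ₁ ≫ b = a ≫ φ₂) (ha : a = 0) :
    mappingCone.map φ₁ φ₂ a b comm = descOfCompEqZero φ₁ (b ≫ mappingCone.inr φ₂)
      (by rw [reassoc_of% comm, ha, zero_comp]) := by
  refine mappingCone_hom_ext (fun n => ?_) ?_
  · simp [mappingCone_inl_v_map_f, ha]
  · simp [mappingCone_inr_map]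

end MappingCone

section Triangle

variable {V : Type*} [Category* V] [Preadditive V] [HasBinaryBiproducts V] [HasZeroObject V]

lemma isIso_quotient_map_descOfCompEqZero_of_splitting {S : ShortComplex (CochainComplex V ℤ)}
    (s : S.Splitting) :
    IsIso ((quotient V (.up ℤ)).map (descOfCompEqZero S.f S.g S.zero)) := by
  let Q := quotient V (.up ℤ)
  have hT := HomotopyCategory.mappingCone_triangleh_distinguished S.f
  have mono_f : Mono (Q.map S.f) :=
    mono_of_mono_fac (h := 𝟙 _) (by rw [← Q.map_comp, s.f_r, Q.map_id])
  have epi_inr : Epi (Q.map (mappingCone.inr S.f)) :=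
    Triangle.epi₂ _ hT (Triangle.mor₃_eq_zero_of_mono₁ _ hT mono_f)
  have f_inr : Q.map S.f ≫ Q.map (mappingCone.inr S.f) = 0 := comp_distTriang_mor_zero₁₂ _ hT
  have g_s_inr : S.g ≫ s.s ≫ mappingCone.inr S.f =
      mappingCone.inr S.f - s.r ≫ S.f ≫ mappingCone.inr S.f := by
    rw [reassoc_of% s.g_s, Preadditive.sub_comp, Category.id_comp, Category.assoc]
  refine ⟨Q.map (s.s ≫ mappingCone.inr S.f), ?_, ?_⟩
  · rw [← cancel_epi (Q.map (mappingCone.inr S.f)), ← Q.map_comp, ← Q.map_comp,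
      reassoc_of% inr_descOfCompEqZero, g_s_inr, Q.map_sub, Q.map_comp s.r, Q.map_comp S.f, f_inr,
      comp_zero, sub_zero]
    exact (Category.comp_id _).symm
  · rw [← Q.map_comp, Category.assoc, inr_descOfCompEqZero, s.s_g, Q.map_id]

lemma isIso_quotient_map_descOfCompEqZero_comp {X Y Z : CochainComplex V ℤ} {f : X ⟶ Y}
    {g : Y ⟶ Z} {h : X ⟶ Z} {a : Y ⟶ Y} {b : Z ⟶ Z} (hfg : f ≫ g = h) (hfa : f ≫ a = 0)
    (hhb : h ≫ b = 0) (comm : g ≫ b = a ≫ g)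
    (isIso_desc : IsIso ((quotient V (.up ℤ)).map (descOfCompEqZero f a hfa)))
    (isIso_map : IsIso ((quotient V (.up ℤ)).map (mappingCone.map g g a b comm))) :
    IsIso ((quotient V (.up ℤ)).map (descOfCompEqZero h b hhb)) := by
  subst hfg
  let φ : mappingConeCompTriangle f g ⟶ mappingCone.triangle g :=
    { hom₁ := descOfCompEqZero f a hfa
      hom₂ := descOfCompEqZero (f ≫ g) b hhb
      hom₃ := mappingCone.map g g a b comm
      comm₁ := by
        have map_desc : mappingCone.map f (f ≫ g) (𝟙 X) g (by simp) ≫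
            descOfCompEqZero (f ≫ g) b hhb = descOfCompEqZero f a hfa ≫ g := by
          simp only [map_comp_descOfCompEqZero, descOfCompEqZero_comp, comm]
        exact map_desc
      comm₂ := by
        have map_map : mappingCone.map (f ≫ g) g f (𝟙 Z) (by simp) ≫
            mappingCone.map g g a b comm =
              descOfCompEqZero (f ≫ g) b hhb ≫ mappingCone.inr g := by
          rw [← mappingCone.map_comp, map_eq_descOfCompEqZero _ hfa, descOfCompEqZero_comp]
          simp only [Category.id_comp]
        exact map_map
      comm₃ := by
        have inr_desc_shift :
            (mappingCone.inr f)⟦(1 : ℤ)⟧' ≫ (descOfCompEqZero f a hfa)⟦(1 : ℤ)⟧' =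
              a⟦(1 : ℤ)⟧' := by
          rw [← Functor.map_comp, inr_descOfCompEqZero]
        exact (Category.assoc _ _ _).trans <|
          (congrArg ((mappingCone.triangle g).mor₃ ≫ ·) inr_desc_shift).trans
            (mappingCone.triangleMap g g a b comm).comm₃ }
  exact isIso₂_of_isIso₁₃ ((quotient V (.up ℤ)).mapTriangle.map φ)
    (HomotopyCategory.mappingConeCompTriangleh_distinguished f g)
    (HomotopyCategory.mappingCone_triangleh_distinguished g) isIso_desc isIso_map

lemma nonempty_iso_obj₁_of_distTriang {T : Type*} [Category* T] [Preadditive T] [HasZeroObject T]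
    [HasShift T ℤ] [∀ n : ℤ, (CategoryTheory.shiftFunctor T n).Additive] [Pretriangulated T]
    {X X' Y Z : T} {u : X ⟶ Y} {u' : X' ⟶ Y} {v : Y ⟶ Z} {w : Z ⟶ X⟦(1 : ℤ)⟧}
    {w' : Z ⟶ X'⟦(1 : ℤ)⟧} (h : Triangle.mk u v w ∈ distTriang T)
    (h' : Triangle.mk u' v w' ∈ distTriang T) : Nonempty (X ≅ X') := by
  have comm₂ : v ≫ 𝟙 Z = 𝟙 Y ≫ v := (Category.comp_id v).trans (Category.id_comp v).symm
  obtain ⟨(a : X ⟶ X'), comm₁, comm₃⟩ :=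
    complete_distinguished_triangle_morphism₁ _ _ h h' (𝟙 Y) (𝟙 Z) comm₂
  let φ : Triangle.mk u v w ⟶ Triangle.mk u' v w' :=
    { hom₁ := a
      hom₂ := 𝟙 Y
      hom₃ := 𝟙 Z
      comm₁ := comm₁
      comm₂ := comm₂
      comm₃ := comm₃ }
  have isIso_a : IsIso a :=
    isIso₁_of_isIso₂₃ φ h h' (inferInstanceAs (IsIso (𝟙 Y))) (inferInstanceAs (IsIso (𝟙 Z)))
  exact ⟨asIso a⟩

end Triangle

section Limit

variable {V : Type*} [Category* V] [Preadditive V] [HasBinaryBiproducts V]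
  [HasProductsOfShape ℕ V] {A : ℕ → CochainComplex V ℤ} {f : ∀ k, A (k + 1) ⟶ A k}

lemma isIso_quotient_map_map_id_sub_towerShift {B : ℕ → CochainComplex V ℤ}
    {g : ∀ k, B (k + 1) ⟶ B k} {u : ∀ k, A k ⟶ B k} (hu : ∀ k, u (k + 1) ≫ g k = f k ≫ u k)
    (hC : ∀ d, ∀ᶠ k in atTop, IsHomotopicallyGE (mappingCone (u k)) d)
    (comm : Limits.Pi.map u ≫ (𝟙 _ - towerShift B g) =
      (𝟙 _ - towerShift A f) ≫ Limits.Pi.map u) :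
    IsIso ((quotient V (.up ℤ)).map (mappingCone.map (Limits.Pi.map u) (Limits.Pi.map u)
      (𝟙 _ - towerShift A f) (𝟙 _ - towerShift B g) comm)) := by
  have map_towerShift : Limits.Pi.map u ≫ towerShift B g = towerShift A f ≫ Limits.Pi.map u := by
    ext1 k
    simp [hu, reassoc_of% towerShift_π]
  rw [mappingCone_map_id_sub _ _ _ map_towerShift]
  refine isIso_quotient_map_id_sub_of_isHomotopicallyGE
    (γ := fun k => mappingCone.map (u (k + 1)) (u k) (f k) (g k) (hu k))
    (isLimitFanMappingCone (productIsProduct A) (productIsProduct B) fun k => by simp)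
    (fun k => ?_) hC
  rw [← mappingCone.map_comp, ← mappingCone.map_comp]
  simp only [towerShift_π]

variable [HasZeroObject V] {L L' : CochainComplex V ℤ} {ft : ∀ k, L ⟶ A k} {ft' : ∀ k, L' ⟶ A k}

lemma isIso_quotient_map_descOfCompEqZero_lift (hft : ∀ k, ft (k + 1) ≫ f k = ft k)
    (hL : ∀ d, ∀ᶠ k in atTop, IsHomotopicallyGE (mappingCone (ft k)) d) :
    IsIso ((quotient V (.up ℤ)).map (descOfCompEqZero (Pi.lift ft) (𝟙 (∏ᶜ A) - towerShift A f)
      (lift_comp_id_sub_towerShift hft))) := by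
  have diag_map : (Pi.lift fun _ : ℕ => 𝟙 L) ≫ Limits.Pi.map ft = Pi.lift ft := by
    ext1 k
    simp
  have comm : Limits.Pi.map ft ≫ (𝟙 (∏ᶜ A) - towerShift A f) =
      (𝟙 (∏ᶜ fun _ => L) - towerShift (fun _ => L) fun _ => 𝟙 L) ≫ Limits.Pi.map ft := by
    ext1 k
    simp [hft, reassoc_of% towerShift_π]
  have isIso_diag := isIso_quotient_map_descOfCompEqZero_of_splitting (constTowerSplitting L)
  have isIso_map := isIso_quotient_map_map_id_sub_towerShift (A := fun _ => L) (f := fun _ => 𝟙 L)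
    (B := A) (g := f) (u := ft) (fun k => by rw [hft, Category.id_comp]) hL comm
  exact isIso_quotient_map_descOfCompEqZero_comp diag_map _ (lift_comp_id_sub_towerShift hft) comm
    isIso_diag isIso_map

lemma exists_distTriang_lift_id_sub_towerShift (hft : ∀ k, ft (k + 1) ≫ f k = ft k)
    (hL : ∀ d, ∀ᶠ k in atTop, IsHomotopicallyGE (mappingCone (ft k)) d) :
    ∃ δ, Triangle.mk ((quotient V (.up ℤ)).map (Pi.lift ft))
      ((quotient V (.up ℤ)).map (𝟙 _ - towerShift A f)) δ ∈ distTriang _ := by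
  let Q := quotient V (.up ℤ)
  have isIso_desc := isIso_quotient_map_descOfCompEqZero_lift hft hL
  let θ := asIso (Q.map (descOfCompEqZero (Pi.lift ft) _ (lift_comp_id_sub_towerShift hft)))
  refine ⟨θ.inv ≫ (mappingCone.triangleh (Pi.lift ft)).mor₃, isomorphic_distinguished _
    (HomotopyCategory.mappingCone_triangleh_distinguished (Pi.lift ft)) _
    (Triangle.isoMk _ _ (Iso.refl _) (Iso.refl _) θ.symm ?_ ?_ ?_)⟩
  · exact (Category.comp_id _).trans (Category.id_comp _).symm
  · refine ((Iso.comp_inv_eq θ).2 ?_).trans (Category.id_comp _).symm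
    exact (congrArg Q.map (inr_descOfCompEqZero _ _ _).symm).trans (Q.map_comp _ _)
  · exact (congrArg (_ ≫ ·) (CategoryTheory.Functor.map_id _ _)).trans (Category.comp_id _)

theorem systemLimit_unique_general (hft : ∀ k, ft (k + 1) ≫ f k = ft k)
    (hL : ∀ d, ∀ᶠ k in atTop, IsHomotopicallyGE (mappingCone (ft k)) d)
    (hft' : ∀ k, ft' (k + 1) ≫ f k = ft' k)
    (hL' : ∀ d, ∀ᶠ k in atTop, IsHomotopicallyGE (mappingCone (ft' k)) d) :
    Nonempty (HomotopyEquiv L L') := by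
  obtain ⟨δ, hT⟩ := exists_distTriang_lift_id_sub_towerShift hft hL
  obtain ⟨δ', hT'⟩ := exists_distTriang_lift_id_sub_towerShift hft' hL'
  obtain ⟨e⟩ := nonempty_iso_obj₁_of_distTriang hT hT'
  exact ⟨HomotopyCategory.homotopyEquivOfIso e⟩

end Limit

end

/-- Limits of inverse systems of cochain complexes are unique up to
chain homotopy equivalence. -/
theorem systemLimit_unique (A : ℕ → Cx R) (f : ∀ k : ℕ, A (k + 1) ⟶ A k)
    (L : Cx R) (ft : ∀ k : ℕ, L ⟶ A k) (hL : IsSystemLimit A f L ft)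
    (L' : Cx R) (ft' : ∀ k : ℕ, L' ⟶ A k) (hL' : IsSystemLimit A f L' ft') :
    Nonempty (HomotopyEquiv L L') :=
  systemLimit_unique_general hL.1 (fun d => Filter.eventually_atTop.2 (hL.2 d))
    hL'.1 fun d => Filter.eventually_atTop.2 (hL'.2 d)
end

section
/- Let A be a cochain complex of R-modules with A^i = 0 for all i < 0 and with a direct sum decomposition A^0 = A^0_1 ⊕ A^0_2. Let π* : A → D be the chain map to the complex D concentrated in degree 0 with D^0 = A^0_2, given in degree 0 by the projection A^0 → A^0_2. If π* is chain homotopic to the zero map, then A is chain homotopy equivalent to a cochain complex A' with A'^i = 0 for all i < 0, A'^0 = A^0_1, and such that the brutal truncation A'^{≥1} (the complex formed by the terms of A' in degrees ≥ 1) is a direct summand of the brutal truncation A^{≥1}: there exist chain maps ι : A'^{≥1} → A^{≥1} and ρ : A^{≥1} → A'^{≥1} with ρ ∘ ι = id. -/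
open CategoryTheory CategoryTheory.Limits

variable {R : Type} [Ring R]

/-!
Write `i`, `j` for the consecutive degrees `0`, `1`. As `D` is concentrated in degree `i`, a
null-homotopy of `π` amounts to a map `h : Aʲ ⟶ M₂` with `d ≫ h = pr₂`. Hence
`f = h ≫ in₂ : Aʲ ⟶ Aⁱ` satisfies `f ≫ d ≫ f = f`, so that `d ≫ f` in degree `i` and `f ≫ d` in
degree `j` form an idempotent of `A` which is null-homotopic through `f`. Splitting off its
image leaves a deformation retract `A'` of `A`, unchanged outside degrees `i` and `j`, with `A'ⁱ`
the image of `1 - d ≫ f = 1 - pr₂ ≫ in₂ = pr₁ ≫ in₁`, that is `M₁`.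
-/

section HomologicalComplex

variable {ι C : Type*} [Category* C] [Preadditive C] {c : ComplexShape ι}
  {A : HomologicalComplex C c} {i j : ι}

lemma exists_retract_of_idem_of_homotopy_zero [IsIdempotentComplete C] {p : A ⟶ A}
    (hp : p ≫ p = p) (hp₀ : Homotopy p 0) :
    ∃ (A' : HomologicalComplex C c) (r : Retract A' A),
      Nonempty (Homotopy (r.r ≫ r.i) (𝟙 A)) ∧ r.r ≫ r.i = 𝟙 A - p := by
  obtain ⟨A', incl, proj, h_retract, h_idem⟩ :=
    IsIdempotentComplete.idempotents_split A (𝟙 A - p) (Idempotents.idem_of_id_sub_idem p hp)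
  have h_sub : 𝟙 A - proj ≫ incl = p := by rw [h_idem, sub_sub_cancel]
  exact ⟨A', ⟨incl, proj, h_retract⟩,
    ⟨(Homotopy.equivSubZero.symm ((Homotopy.ofEq h_sub).trans hp₀)).symm⟩, h_idem⟩

section NullHomotopicMap

variable [DecidableEq ι]

/-- The family of maps `A.X k ⟶ A.X l` whose only nonzero component is `f : A.X j ⟶ A.X i`. It is
used as a homotopy operator, and is encoded as a dependent `Pi.single` to avoid casts along
`k = j` and `l = i`. -/
def singleHomotopyOperator (f : A.X j ⟶ A.X i) (k l : ι) : A.X k ⟶ A.X l :=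
  Pi.single (M := fun k => ∀ l, A.X k ⟶ A.X l) j (Pi.single i f) k l

namespace singleHomotopyOperator

lemma apply_self (f : A.X j ⟶ A.X i) : singleHomotopyOperator f j i = f := by
  rw [singleHomotopyOperator, Pi.single_eq_same, Pi.single_eq_same]

lemma apply_of_source_ne (f : A.X j ⟶ A.X i) {k : ι} (hk : k ≠ j) (l : ι) :
    singleHomotopyOperator f k l = 0 := by
  rw [singleHomotopyOperator, Pi.single_eq_of_ne hk, Pi.zero_apply]

lemma apply_of_target_ne (f : A.X j ⟶ A.X i) (k : ι) {l : ι} (hl : l ≠ i) :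
    singleHomotopyOperator f k l = 0 := by
  obtain rfl | hk := eq_or_ne k j
  · rw [singleHomotopyOperator, Pi.single_eq_same, Pi.single_eq_of_ne hl]
  · exact apply_of_source_ne f hk l

lemma dNext_of_ne (f : A.X j ⟶ A.X i) {k : ι} (hk : k ≠ i) :
    dNext k (singleHomotopyOperator f) = 0 :=
  (congrArg _ (apply_of_target_ne f _ hk)).trans comp_zero

lemma prevD_of_ne (f : A.X j ⟶ A.X i) {k : ι} (hk : k ≠ j) :
    prevD k (singleHomotopyOperator f) = 0 :=
  (congrArg (· ≫ _) (apply_of_source_ne f hk _)).trans zero_comp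

end singleHomotopyOperator

/-- The null-homotopic endomorphism `dH + Hd` of `A`, where `H` has `f : A.X j ⟶ A.X i` as its only
nonzero component. -/
noncomputable def singleNullHomotopicMap (f : A.X j ⟶ A.X i) : A ⟶ A :=
  Homotopy.nullHomotopicMap (singleHomotopyOperator f)

namespace singleNullHomotopicMap

open singleHomotopyOperator

lemma f_eq (f : A.X j ⟶ A.X i) (k : ι) :
    (singleNullHomotopicMap f).f k =
      dNext k (singleHomotopyOperator f) + prevD k (singleHomotopyOperator f) :=
  rfl

/-- The null-homotopy of `singleNullHomotopicMap f` given by `f`. -/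
noncomputable def homotopyZero (hij : c.Rel i j) (f : A.X j ⟶ A.X i) :
    Homotopy (singleNullHomotopicMap f) 0 :=
  Homotopy.nullHomotopy _ fun k l hlk => by
    obtain rfl | hk := eq_or_ne k j
    · exact apply_of_target_ne f k fun hl => hlk (hl ▸ hij)
    · exact apply_of_source_ne f hk l

lemma f_source (hij : c.Rel i j) (hne : i ≠ j) (f : A.X j ⟶ A.X i) :
    (singleNullHomotopicMap f).f i = A.d i j ≫ f := by
  rw [f_eq, dNext_eq _ hij, apply_self, prevD_of_ne f hne, add_zero]

lemma f_target (hij : c.Rel i j) (hne : i ≠ j) (f : A.X j ⟶ A.X i) :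
    (singleNullHomotopicMap f).f j = f ≫ A.d i j := by
  rw [f_eq, dNext_of_ne f hne.symm, prevD_eq _ hij, apply_self, zero_add]

lemma f_of_ne (f : A.X j ⟶ A.X i) {k : ι} (hki : k ≠ i) (hkj : k ≠ j) :
    (singleNullHomotopicMap f).f k = 0 := by
  rw [f_eq, dNext_of_ne f hki, prevD_of_ne f hkj, add_zero]

lemma idem (hij : c.Rel i j) (hne : i ≠ j) {f : A.X j ⟶ A.X i} (hf : f ≫ A.d i j ≫ f = f) :
    singleNullHomotopicMap f ≫ singleNullHomotopicMap f = singleNullHomotopicMap f := by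
  ext k
  rw [HomologicalComplex.comp_f]
  obtain rfl | hki := eq_or_ne k i
  · rw [f_source hij hne, Category.assoc, hf]
  obtain rfl | hkj := eq_or_ne k j
  · rw [f_target hij hne, Category.assoc, reassoc_of% hf]
  · rw [f_of_ne f hki hkj, zero_comp]

end singleNullHomotopicMap

end NullHomotopicMap

lemma exists_retract_of_comp_d_comp_eq_self [IsIdempotentComplete C] (hij : c.Rel i j)
    (hne : i ≠ j) {f : A.X j ⟶ A.X i} (hf : f ≫ A.d i j ≫ f = f) :
    ∃ (A' : HomologicalComplex C c) (r : Retract A' A),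
      Nonempty (Homotopy (r.r ≫ r.i) (𝟙 A)) ∧
      r.r.f i ≫ r.i.f i = 𝟙 (A.X i) - A.d i j ≫ f ∧
      ∀ k, k ≠ i → k ≠ j → IsIso (r.i.f k) := by
  classical
  obtain ⟨A', r, h_homotopy, h_idem⟩ :=
    exists_retract_of_idem_of_homotopy_zero (singleNullHomotopicMap.idem hij hne hf)
      (singleNullHomotopicMap.homotopyZero hij f)
  have h_idem_f (k : ι) : r.r.f k ≫ r.i.f k = 𝟙 (A.X k) - (singleNullHomotopicMap f).f k :=
    HomologicalComplex.congr_hom h_idem k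
  refine ⟨A', r, h_homotopy, ?_, fun k hki hkj => ?_⟩
  · rw [h_idem_f, singleNullHomotopicMap.f_source hij hne]
  · refine ⟨r.r.f k, HomologicalComplex.congr_hom r.retract k, ?_⟩
    rw [h_idem_f, singleNullHomotopicMap.f_of_ne f hki hkj, sub_zero]

lemma exists_factor_through_d_of_homotopy_zero [DecidableEq ι] [HasZeroObject C]
    (hij : c.Rel i j) {M : C} {φ : A ⟶ (HomologicalComplex.single C c i).obj M}
    (hφ : Homotopy φ 0) :
    ∃ h : A.X j ⟶ M,
      φ.f i = A.d i j ≫ h ≫ (HomologicalComplex.singleObjXSelf c i M).inv := by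
  refine ⟨hφ.hom j i ≫ (HomologicalComplex.singleObjXSelf c i M).hom, ?_⟩
  have h_comm := hφ.comm i
  rw [dNext_eq hφ.hom hij] at h_comm
  simpa [prevD] using h_comm

end HomologicalComplex

/-- Two splittings of the same idempotent have isomorphic images. -/
def isoOfRetractsOfSameIdempotent {C : Type*} [Category* C] {X Y Z : C}
    (r : Retract X Z) (s : Retract Y Z) (h : r.r ≫ r.i = s.r ≫ s.i) : X ≅ Y where
  hom := r.i ≫ s.r
  inv := s.i ≫ r.r
  hom_inv_id := by
    rw [Category.assoc, ← reassoc_of% h, r.retract, Category.comp_id, r.retract]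
  inv_hom_id := by
    rw [Category.assoc, reassoc_of% h, s.retract, Category.comp_id, s.retract]

lemma iso_hom_fst_inl_inv_eq_id_sub {C : Type*} [Category* C] [Preadditive C] {X M₁ M₂ : C}
    [HasBinaryBiproduct M₁ M₂] (e : X ≅ M₁ ⊞ M₂) :
    e.hom ≫ biprod.fst ≫ biprod.inl ≫ e.inv =
      𝟙 X - e.hom ≫ biprod.snd ≫ biprod.inr ≫ e.inv :=
  eq_sub_of_add_eq <| calc
    e.hom ≫ biprod.fst ≫ biprod.inl ≫ e.inv + e.hom ≫ biprod.snd ≫ biprod.inr ≫ e.inv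
      = e.hom ≫ (biprod.fst ≫ biprod.inl + biprod.snd ≫ biprod.inr) ≫ e.inv := by
        simp only [Preadditive.add_comp, Preadditive.comp_add, Category.assoc]
    _ = 𝟙 X := by rw [biprod.total, Category.id_comp, e.hom_inv_id]

theorem remove_summand_of_nullhomotopic_projection_general
    {ι C : Type*} [DecidableEq ι] [Category* C] [Preadditive C] [HasZeroObject C]
    [IsIdempotentComplete C] {c : ComplexShape ι} (A : HomologicalComplex C c)
    {i j : ι} (hij : c.Rel i j) (hne : i ≠ j)
    (M₁ M₂ : C) [HasBinaryBiproduct M₁ M₂] (e : A.X i ≅ M₁ ⊞ M₂)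
    (π : A ⟶ (HomologicalComplex.single C c i).obj M₂)
    (hπ : π.f i = e.hom ≫ biprod.snd ≫ (HomologicalComplex.singleObjXSelf c i M₂).inv)
    (hnull : Nonempty (Homotopy π 0)) :
    ∃ (A' : HomologicalComplex C c) (r : Retract A' A),
      Nonempty (Homotopy (r.r ≫ r.i) (𝟙 A)) ∧
      Nonempty (A'.X i ≅ M₁) ∧
      ∀ k, k ≠ i → k ≠ j → IsIso (r.i.f k) := by
  obtain ⟨h, hπh⟩ := exists_factor_through_d_of_homotopy_zero hij hnull.some
  have hdh : A.d i j ≫ h = e.hom ≫ biprod.snd := by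
    simpa only [← Category.assoc, cancel_mono] using hπh.symm.trans hπ
  let f : A.X j ⟶ A.X i := h ≫ biprod.inr ≫ e.inv
  have hf : f ≫ A.d i j ≫ f = f := by simp [f, reassoc_of% hdh]
  obtain ⟨A', r, h_homotopy, h_idem, h_iso⟩ :=
    exists_retract_of_comp_d_comp_eq_self hij hne hf
  let rᵢ : Retract (A'.X i) (A.X i) := r.map (HomologicalComplex.eval C c i)
  let s : Retract M₁ (A.X i) := { i := biprod.inl ≫ e.inv, r := e.hom ≫ biprod.fst }
  have h_same : rᵢ.r ≫ rᵢ.i = s.r ≫ s.i :=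
    calc
      rᵢ.r ≫ rᵢ.i = 𝟙 (A.X i) - A.d i j ≫ f := h_idem
      _ = 𝟙 (A.X i) - e.hom ≫ biprod.snd ≫ biprod.inr ≫ e.inv := by
        rw [reassoc_of% hdh]
      _ = s.r ≫ s.i := by rw [← iso_hom_fst_inl_inv_eq_id_sub, Category.assoc]
  exact ⟨A', r, h_homotopy, ⟨isoOfRetractsOfSameIdempotent rᵢ s h_same⟩, h_iso⟩

/-- Lemma 2.7, "Matt's lemma".  Let `A` be a cochain complex of
`R`-modules vanishing in negative degrees, with a direct sum decomposition
`A^0 ≅ M₁ ⊞ M₂`.  Let `π : A ⟶ D` be the chain map to the complex `D` concentrated in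
degree `0` with `D^0 = M₂`, given in degree `0` by the projection onto `M₂`.  If `π` is
chain homotopic to the zero map, then `A` is chain homotopy equivalent to a complex `A'`
vanishing in negative degrees with `A'^0 ≅ M₁`, whose brutal truncation `A'^{≥1}` is a
direct summand of the brutal truncation `A^{≥1}` (expressed degreewise: there are chain
maps `ι : A'^{≥1} ⟶ A^{≥1}` and `ρ : A^{≥1} ⟶ A'^{≥1}` with `ρ ∘ ι = id`). -/
theorem remove_summand_of_nullhomotopic_projection
    (A : Cx R) (hA : ∀ i : ℤ, i < 0 → IsZero (A.X i))
    (M₁ M₂ : ModuleCat R) (e : A.X 0 ≅ M₁ ⊞ M₂)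
    (π : A ⟶ (HomologicalComplex.single (ModuleCat R) (ComplexShape.up ℤ) 0).obj M₂)
    (hπ : π.f 0 = e.hom ≫ biprod.snd ≫
      (HomologicalComplex.singleObjXSelf (ComplexShape.up ℤ) 0 M₂).inv)
    (hnull : Nonempty (Homotopy π 0)) :
    ∃ (A' : Cx R) (_ : HomotopyEquiv A A'),
      (∀ i : ℤ, i < 0 → IsZero (A'.X i)) ∧
      Nonempty (A'.X 0 ≅ M₁) ∧
      ∃ (ι : ∀ i : ℤ, 1 ≤ i → (A'.X i ⟶ A.X i)) (ρ : ∀ i : ℤ, 1 ≤ i → (A.X i ⟶ A'.X i)),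
        (∀ (i : ℤ) (hi : 1 ≤ i),
          ι i hi ≫ A.d i (i + 1) = A'.d i (i + 1) ≫ ι (i + 1) (by omega)) ∧
        (∀ (i : ℤ) (hi : 1 ≤ i),
          ρ i hi ≫ A'.d i (i + 1) = A.d i (i + 1) ≫ ρ (i + 1) (by omega)) ∧
        (∀ (i : ℤ) (hi : 1 ≤ i), ι i hi ≫ ρ i hi = 𝟙 (A'.X i)) := by
  obtain ⟨A', r, ⟨h_homotopy⟩, h_zero, h_iso⟩ :=
    remove_summand_of_nullhomotopic_projection_general A (j := 1) (by simp) (by simp)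
      M₁ M₂ e π hπ hnull
  refine ⟨A', ⟨r.r, r.i, h_homotopy, Homotopy.ofEq r.retract⟩, fun k hk => ?_, h_zero,
    fun k _ => r.i.f k, fun k _ => r.r.f k, fun k _ => r.i.comm k (k + 1),
    fun k _ => r.r.comm k (k + 1), fun k _ => HomologicalComplex.congr_hom r.retract k⟩
  have := h_iso k (by lia) (by lia)
  exact (hA k hk).of_iso (asIso (r.i.f k))
end

section
/- For every coloring γ : {1, …, n} → ℕ, the sum over all crossings of the full twist word FT_n of the minimum of the two colors involved at that crossing equals twice the color size of γ: writing FT_n = [i_1, …, i_{n(n−1)}] with induced colorings γ(k), one has Σ_{k=1}^{n(n−1)} min(γ(k−1)(i_k), γ(k−1)(i_k+1)) = 2 · Σ_{1 ≤ i < j ≤ n} min(γ(i), γ(j)). -/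
/-!
In one pass `[1, …, n - 1]` the strand in position `1` crosses each of the others once, always from
the left, and the positions are then permuted by the `n`-cycle `ρ = (1 2 … n)`. So pass `k` of
the full twist, counted from `0`, is the one in which strand `ρ ^ k 1 = k + 1` crosses all the
others, and over the `n` passes each ordered pair of distinct strands crosses exactly once. The
factor `2` appears because `min` is symmetric.
-/

/-- The sum over the crossings of a positive braid word (read top to bottom, with
current top coloring `γ`) of the minimum of the two colors involved at each crossing:
for `w = [i₁, …, i_ℓ]` this is `∑ₖ min (γ(k−1) i_k) (γ(k−1) (i_k+1))`, where the
induced colorings satisfy `γ(0) = γ` and `γ(k) = γ(k−1) ∘ s_{i_k}` with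
`s_i = (i, i+1)` the adjacent transposition. -/
def crossingSum (γ : ℕ → ℕ) : List ℕ → ℕ
  | [] => 0
  | i :: w => min (γ i) (γ (i + 1)) + crossingSum (fun p => γ (Equiv.swap i (i + 1) p)) w

/-- The full twist word `FT_n` on `n` strands: the concatenation of `n` copies of
the word `[1, 2, …, n−1]`; it has length `n(n−1)`. -/
def fullTwistWord (n : ℕ) : List ℕ :=
  (List.replicate n ((List.range (n - 1)).map (· + 1))).flatten

section FinsetSums

variable {α M : Type*} [AddCommMonoid M]

theorem sum_erase_perm_apply [DecidableEq α] {s : Finset α} {σ : Equiv.Perm α}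
    (hσ : {a | σ a ≠ a} ⊆ s) (a : α) (f : α → M) :
    ∑ b ∈ s.erase (σ a), f b = ∑ b ∈ s.erase a, f (σ b) := by
  have h_map : (s.erase a).map σ.toEmbedding = s.erase (σ a) := by
    rw [Finset.map_erase, Finset.map_perm hσ, Equiv.coe_toEmbedding]
  rw [← h_map, Finset.sum_map, Equiv.coe_toEmbedding]

theorem sum_sum_erase_eq_sum_sum_filter_lt [LinearOrder α] (s : Finset α) (f : α → α → M) :
    ∑ i ∈ s, ∑ j ∈ s.erase i, f i j = ∑ i ∈ s, ∑ j ∈ s with i < j, (f i j + f j i) := by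
  have h_split (i : α) :
      ∑ j ∈ s.erase i, f i j = ∑ j ∈ s with i < j, f i j + ∑ j ∈ s with j < i, f i j := by
    rw [← Finset.sum_union (Finset.disjoint_filter.2 fun _ _ h => h.asymm)]
    congr 1
    grind
  have h_swap : ∑ i ∈ s, ∑ j ∈ s with j < i, f i j = ∑ i ∈ s, ∑ j ∈ s with i < j, f j i :=
    Finset.sum_comm' (by grind)
  simp only [h_split, Finset.sum_add_distrib, h_swap]

end FinsetSums

/-- The permutation `s_{i_1} ⋯ s_{i_ℓ}` underlying the braid word `[i_1, …, i_ℓ]`, with the product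
in the order for which the coloring induced by `γ` at the bottom of `w` is `γ ∘ braidPerm w`. -/
def braidPerm (w : List ℕ) : Equiv.Perm ℕ :=
  (w.map fun i => Equiv.swap i (i + 1)).prod

theorem braidPerm_cons (i : ℕ) (w : List ℕ) :
    braidPerm (i :: w) = Equiv.swap i (i + 1) * braidPerm w := by
  simp [braidPerm]

theorem braidPerm_range' (a m : ℕ) :
    braidPerm (List.range' a m) = (List.range' a (m + 1)).formPerm := by
  induction m generalizing a with
  | zero => simp [braidPerm]
  | succ m ih =>
    rw [List.range'_succ, braidPerm_cons, ih]
    simp only [List.range'_succ, List.formPerm_cons_cons]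

theorem crossingSum_append (γ : ℕ → ℕ) (u v : List ℕ) :
    crossingSum γ (u ++ v) = crossingSum γ u + crossingSum (γ ∘ braidPerm u) v := by
  induction u generalizing γ with
  | nil => simp [crossingSum, braidPerm]
  | cons i u ih =>
    rw [List.cons_append, crossingSum, ih, crossingSum, braidPerm_cons, add_assoc]
    rfl

theorem crossingSum_flatten_replicate (γ : ℕ → ℕ) (w : List ℕ) (m : ℕ) :
    crossingSum γ (List.replicate m w).flatten =
      ∑ k ∈ Finset.range m, crossingSum (γ ∘ ⇑(braidPerm w ^ k)) w := by
  induction m generalizing γ with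
  | zero => simp [crossingSum]
  | succ m ih =>
    rw [List.replicate_succ, List.flatten_cons, crossingSum_append, ih, Finset.sum_range_succ',
      add_comm]
    simp only [pow_succ', Equiv.Perm.coe_mul, Function.comp_assoc, pow_zero, Equiv.Perm.coe_one,
      Function.comp_id]

theorem crossingSum_range' (γ : ℕ → ℕ) (a m : ℕ) :
    crossingSum γ (List.range' a m) = ∑ j ∈ Finset.Ioc a (a + m), min (γ a) (γ j) := by
  induction m generalizing γ a with
  | zero => simp [crossingSum]
  | succ m ih =>
    have h_tail : ∀ j ∈ Finset.Ioc (a + 1) (a + 1 + m),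
        min (γ (Equiv.swap a (a + 1) (a + 1))) (γ (Equiv.swap a (a + 1) j)) =
          min (γ a) (γ j) := by
      intro j hj
      have := (Finset.mem_Ioc.1 hj).1
      rw [Equiv.swap_apply_right, Equiv.swap_apply_of_ne_of_ne (by omega) (by omega)]
    rw [List.range'_succ, crossingSum, ih, Finset.sum_congr rfl h_tail,
      Finset.add_sum_Ioc_eq_sum_Icc (f := fun j => min (γ a) (γ j)) (by omega),
      Finset.Icc_add_one_left_eq_Ioc, add_right_comm, add_assoc]

theorem braidPerm_range'_pow_apply_left {a m k : ℕ} (hk : k ≤ m) :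
    (braidPerm (List.range' a m) ^ k) a = a + k := by
  have h_nodup : (a :: List.range' (a + 1) m).Nodup := by
    simpa only [List.range'_succ] using List.nodup_range' (s := a) (n := m + 1)
  rw [braidPerm_range', List.range'_succ, List.formPerm_pow_apply_head _ _ h_nodup]
  simp [← List.range'_succ, Nat.mod_eq_of_lt (Nat.lt_succ_of_le hk)]

theorem support_braidPerm_range'_pow_subset (a m k : ℕ) :
    {p | (braidPerm (List.range' a m) ^ k) p ≠ p} ⊆ Finset.Icc a (a + m) := by
  intro p hp
  have h_mem : p ∈ List.range' a (m + 1) :=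
    List.mem_of_formPerm_apply_ne <|
      braidPerm_range' a m ▸ Equiv.Perm.set_support_zpow_subset _ (k : ℤ) hp
  grind

theorem crossingSum_comp_braidPerm_pow_range' (γ : ℕ → ℕ) {a m k : ℕ} (hk : k ≤ m) :
    crossingSum (γ ∘ ⇑(braidPerm (List.range' a m) ^ k)) (List.range' a m) =
      ∑ j ∈ (Finset.Icc a (a + m)).erase (a + k), min (γ (a + k)) (γ j) := by
  have h_left := braidPerm_range'_pow_apply_left (a := a) hk
  have h_perm := sum_erase_perm_apply (support_braidPerm_range'_pow_subset a m k) a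
    fun j => min (γ (a + k)) (γ j)
  rw [h_left, Finset.Icc_erase_left] at h_perm
  simp only [crossingSum_range', Function.comp_apply, h_left, h_perm]

theorem crossingSum_flatten_replicate_range' (γ : ℕ → ℕ) (a m : ℕ) :
    crossingSum γ (List.replicate (m + 1) (List.range' a m)).flatten =
      ∑ i ∈ Finset.Icc a (a + m), ∑ j ∈ (Finset.Icc a (a + m)).erase i, min (γ i) (γ j) := by
  rw [crossingSum_flatten_replicate, ← Finset.Ico_add_one_right_eq_Icc,
    Finset.sum_Ico_eq_sum_range, add_assoc, Nat.add_sub_cancel_left]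
  refine Finset.sum_congr rfl fun k hk => ?_
  exact crossingSum_comp_braidPerm_pow_range' γ (Finset.mem_range_succ_iff.1 hk)

theorem fullTwistWord_eq_flatten_replicate_range' (n : ℕ) :
    fullTwistWord n = (List.replicate n (List.range' 1 (n - 1))).flatten := by
  simp only [fullTwistWord, List.range'_eq_map_range, add_comm]

/-- Proposition 3.11.  For every coloring `γ` of the `n` strands, the
sum over all crossings of the full twist `FT_n` of the minimum of the two colors
involved equals twice the color size of `γ`:
`∑ₖ min (γ(k−1) i_k) (γ(k−1) (i_k+1)) = 2 ∑_{1 ≤ i < j ≤ n} min (γ i) (γ j)`. -/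
theorem fullTwist_crossingSum (n : ℕ) (hn : 1 ≤ n) (γ : ℕ → ℕ) :
    crossingSum γ (fullTwistWord n) =
      2 * ∑ i ∈ Finset.Icc 1 n, ∑ j ∈ Finset.Ioc i n, min (γ i) (γ j) := by
  have h_filter : ∀ i ∈ Finset.Icc 1 n, {j ∈ Finset.Icc 1 n | i < j} = Finset.Ioc i n := by grind
  calc crossingSum γ (fullTwistWord n)
    _ = ∑ i ∈ Finset.Icc 1 n, ∑ j ∈ (Finset.Icc 1 n).erase i, min (γ i) (γ j) := by
      have h_pass := crossingSum_flatten_replicate_range' γ 1 (n - 1)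
      rwa [Nat.sub_add_cancel hn, Nat.add_sub_cancel' hn,
        ← fullTwistWord_eq_flatten_replicate_range'] at h_pass
    _ = ∑ i ∈ Finset.Icc 1 n, ∑ j ∈ Finset.Icc 1 n with i < j,
          (min (γ i) (γ j) + min (γ j) (γ i)) := sum_sum_erase_eq_sum_sum_filter_lt _ _
    _ = ∑ i ∈ Finset.Icc 1 n, ∑ j ∈ Finset.Ioc i n, 2 * min (γ i) (γ j) :=
      Finset.sum_congr rfl fun i hi => by
        simp only [h_filter i hi, min_comm (γ _) (γ i), two_mul]
    _ = 2 * ∑ i ∈ Finset.Icc 1 n, ∑ j ∈ Finset.Ioc i n, min (γ i) (γ j) := by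
      simp only [Finset.mul_sum]
end

section
/- Let w be a nonempty positive braid word on n strands with coloring γ that is color-pure with respect to γ and has no uni-colored crossings. Then w is positively equivalent to a positive braid word w' containing a clasp, i.e. containing two equal consecutive letters [i, i] for some i ∈ {1, …, n−1}; moreover w' is again color-pure with respect to γ. -/
/-- The coloring induced at the bottom of a positive braid word, starting from the
coloring `γ` at the top: each letter `i` replaces the current coloring `γ'` by
`γ' ∘ s_i`, where `s_i = (i, i+1)` is the adjacent transposition.  A word `w` is
color-pure with respect to `γ` when `colorAfter γ w = γ`. -/
def colorAfter (γ : ℕ → ℕ) : List ℕ → (ℕ → ℕ)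
  | [] => γ
  | i :: w => colorAfter (fun p => γ (Equiv.swap i (i + 1) p)) w

/-- A positive braid word with top coloring `γ` has no uni-colored crossings:
at every crossing of the word (read top to bottom), the two colors involved are
different. -/
def NoUnicolored (γ : ℕ → ℕ) : List ℕ → Prop
  | [] => True
  | i :: w => γ i ≠ γ (i + 1) ∧ NoUnicolored (fun p => γ (Equiv.swap i (i + 1) p)) w

/-- One elementary substitution between positive braid words: replace a consecutive
subword `[i, j]` by `[j, i]` when `|i − j| ≥ 2`, or replace `[i, i+1, i]` by
`[i+1, i, i+1]` or vice versa. -/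
inductive BraidMove : List ℕ → List ℕ → Prop
  | comm (u v : List ℕ) (i j : ℕ) (hij : i + 2 ≤ j ∨ j + 2 ≤ i) :
      BraidMove (u ++ i :: j :: v) (u ++ j :: i :: v)
  | braid (u v : List ℕ) (i : ℕ) :
      BraidMove (u ++ i :: (i + 1) :: i :: v) (u ++ (i + 1) :: i :: (i + 1) :: v)
  | braid_inv (u v : List ℕ) (i : ℕ) :
      BraidMove (u ++ (i + 1) :: i :: (i + 1) :: v) (u ++ i :: (i + 1) :: i :: v)

/-- Positive equivalence of positive braid words: a finite sequence of elementary
substitutions. -/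
def PosEquiv : List ℕ → List ℕ → Prop := Relation.ReflTransGen BraidMove

/-!
Induct on a strict upper bound `m + 1` of the letters. Pushing letters leftwards through a
descending run either exposes a clasp or brings the word to the form `u · [m, m-1, …, k]` with all
letters of `u` below `m`. If the run is nonempty, then `m` occurs exactly once, and its crossing
involves the first and the last color of position `m + 1`; purity would make it uni-colored. Hence
the run is empty, and the bound on the letters has dropped to `m`.
-/

section Coloring

theorem colorAfter_append (γ : ℕ → ℕ) (u v : List ℕ) :
    colorAfter γ (u ++ v) = colorAfter (colorAfter γ u) v := by
  induction u generalizing γ with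
  | nil => rfl
  | cons _ _ ih => exact ih _

theorem noUnicolored_append (γ : ℕ → ℕ) (u v : List ℕ) :
    NoUnicolored γ (u ++ v) ↔ NoUnicolored γ u ∧ NoUnicolored (colorAfter γ u) v := by
  induction u generalizing γ with
  | nil => simp only [List.nil_append, NoUnicolored, colorAfter, true_and]
  | cons i u ih => simp only [List.cons_append, NoUnicolored, colorAfter, ih, and_assoc]

theorem colorAfter_apply_of_untouched (γ : ℕ → ℕ) {u : List ℕ} {p : ℕ}
    (hu : ∀ i ∈ u, i ≠ p ∧ i + 1 ≠ p) : colorAfter γ u p = γ p := by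
  induction u generalizing γ with
  | nil => rfl
  | cons i u ih =>
    obtain ⟨hi, hu⟩ := List.forall_mem_cons.1 hu
    rw [colorAfter, ih _ hu, Equiv.swap_apply_of_ne_of_ne hi.1.symm hi.2.symm]

theorem swap_succ_swap_succ_comm {i j : ℕ} (hij : i + 2 ≤ j ∨ j + 2 ≤ i) (p : ℕ) :
    Equiv.swap i (i + 1) (Equiv.swap j (j + 1) p) =
      Equiv.swap j (j + 1) (Equiv.swap i (i + 1) p) := by
  simp only [Equiv.swap_apply_def]
  grind

theorem swap_succ_braid (i p : ℕ) :
    Equiv.swap i (i + 1) (Equiv.swap (i + 1) (i + 1 + 1) (Equiv.swap i (i + 1) p)) =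
      Equiv.swap (i + 1) (i + 1 + 1)
        (Equiv.swap i (i + 1) (Equiv.swap (i + 1) (i + 1 + 1) p)) := by
  simp only [Equiv.swap_apply_def]
  grind

theorem colorAfter_comm (γ : ℕ → ℕ) {i j : ℕ} (hij : i + 2 ≤ j ∨ j + 2 ≤ i) (v : List ℕ) :
    colorAfter γ (i :: j :: v) = colorAfter γ (j :: i :: v) := by
  simp only [colorAfter, swap_succ_swap_succ_comm hij]

theorem colorAfter_braid (γ : ℕ → ℕ) (i : ℕ) (v : List ℕ) :
    colorAfter γ (i :: (i + 1) :: i :: v) = colorAfter γ ((i + 1) :: i :: (i + 1) :: v) := by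
  simp only [colorAfter, swap_succ_braid]

theorem noUnicolored_comm (γ : ℕ → ℕ) {i j : ℕ} (hij : i + 2 ≤ j ∨ j + 2 ≤ i) (v : List ℕ) :
    NoUnicolored γ (i :: j :: v) ↔ NoUnicolored γ (j :: i :: v) := by
  have hj : Equiv.swap i (i + 1) j = j ∧ Equiv.swap i (i + 1) (j + 1) = j + 1 := by
    constructor <;> apply Equiv.swap_apply_of_ne_of_ne <;> omega
  have hi : Equiv.swap j (j + 1) i = i ∧ Equiv.swap j (j + 1) (i + 1) = i + 1 := by
    constructor <;> apply Equiv.swap_apply_of_ne_of_ne <;> omega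
  simp only [NoUnicolored, swap_succ_swap_succ_comm hij, hi, hj]
  exact and_left_comm

-- On both sides the three strands involved cross pairwise exactly once.
theorem noUnicolored_braid (γ : ℕ → ℕ) (i : ℕ) (v : List ℕ) :
    NoUnicolored γ (i :: (i + 1) :: i :: v) ↔
      NoUnicolored γ ((i + 1) :: i :: (i + 1) :: v) := by
  have hi : Equiv.swap (i + 1) (i + 1 + 1) i = i := by
    apply Equiv.swap_apply_of_ne_of_ne <;> omega
  have hi₂ : Equiv.swap i (i + 1) (i + 1 + 1) = i + 1 + 1 := by
    apply Equiv.swap_apply_of_ne_of_ne <;> omega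
  simp only [NoUnicolored, swap_succ_braid, hi, hi₂, Equiv.swap_apply_left,
    Equiv.swap_apply_right]
  tauto

end Coloring

namespace BraidMove

variable {w w' : List ℕ}

theorem colorAfter_eq (h : BraidMove w w') (γ : ℕ → ℕ) : colorAfter γ w' = colorAfter γ w := by
  cases h with
  | comm u v i j hij => simp only [colorAfter_append, colorAfter_comm _ hij]
  | braid u v i => simp only [colorAfter_append, colorAfter_braid]
  | braid_inv u v i => simp only [colorAfter_append, colorAfter_braid]

theorem noUnicolored_iff (h : BraidMove w w') (γ : ℕ → ℕ) :
    NoUnicolored γ w' ↔ NoUnicolored γ w := by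
  cases h with
  | comm u v i j hij => simp only [noUnicolored_append, noUnicolored_comm _ hij]
  | braid u v i => simp only [noUnicolored_append, noUnicolored_braid]
  | braid_inv u v i => simp only [noUnicolored_append, noUnicolored_braid]

theorem mem_iff (h : BraidMove w w') (i : ℕ) : i ∈ w' ↔ i ∈ w := by
  cases h <;> simp only [List.mem_append, List.mem_cons] <;> tauto

theorem append_left (h : BraidMove w w') (a : List ℕ) : BraidMove (a ++ w) (a ++ w') := by
  cases h with
  | comm u v i j hij => simpa only [List.append_assoc] using comm (a ++ u) v i j hij
  | braid u v i => simpa only [List.append_assoc] using braid (a ++ u) v i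
  | braid_inv u v i => simpa only [List.append_assoc] using braid_inv (a ++ u) v i

theorem append_right (h : BraidMove w w') (b : List ℕ) : BraidMove (w ++ b) (w' ++ b) := by
  cases h with
  | comm u v i j hij =>
    simpa only [List.append_assoc, List.cons_append] using comm u (v ++ b) i j hij
  | braid u v i => simpa only [List.append_assoc, List.cons_append] using braid u (v ++ b) i
  | braid_inv u v i =>
    simpa only [List.append_assoc, List.cons_append] using braid_inv u (v ++ b) i

end BraidMove

namespace PosEquiv

variable {w w' w'' : List ℕ}

theorem trans (h : PosEquiv w w') (h' : PosEquiv w' w'') : PosEquiv w w'' :=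
  Relation.ReflTransGen.trans h h'

instance : Trans PosEquiv PosEquiv PosEquiv := ⟨trans⟩

theorem colorAfter_eq (h : PosEquiv w w') (γ : ℕ → ℕ) : colorAfter γ w' = colorAfter γ w := by
  induction h with
  | refl => rfl
  | tail _ hmove ih => exact (hmove.colorAfter_eq γ).trans ih

theorem noUnicolored_iff (h : PosEquiv w w') (γ : ℕ → ℕ) :
    NoUnicolored γ w' ↔ NoUnicolored γ w := by
  induction h with
  | refl => rfl
  | tail _ hmove ih => exact (hmove.noUnicolored_iff γ).trans ih

theorem mem_iff (h : PosEquiv w w') (i : ℕ) : i ∈ w' ↔ i ∈ w := by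
  induction h with
  | refl => rfl
  | tail _ hmove ih => exact (hmove.mem_iff i).trans ih

theorem append_left (h : PosEquiv w w') (a : List ℕ) : PosEquiv (a ++ w) (a ++ w') :=
  Relation.ReflTransGen.lift (a ++ ·) (fun _ _ hmove => hmove.append_left a) _ _ h

theorem append_right (h : PosEquiv w w') (b : List ℕ) : PosEquiv (w ++ b) (w' ++ b) :=
  Relation.ReflTransGen.lift (· ++ b) (fun _ _ hmove => hmove.append_right b) _ _ h

theorem append_singleton_of_far {u : List ℕ} {j : ℕ} (hu : ∀ i ∈ u, i + 2 ≤ j ∨ j + 2 ≤ i) :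
    PosEquiv (u ++ [j]) (j :: u) := by
  induction u with
  | nil => exact .refl
  | cons i u ih =>
    obtain ⟨hi, hu⟩ := List.forall_mem_cons.1 hu
    exact ((ih hu).append_left [i]).tail (.comm [] u i j hi)

end PosEquiv

/-- The word `w` is positively equivalent to a word containing a clasp `[i, i]`. -/
def ExposesClasp (w : List ℕ) : Prop :=
  ∃ u v i, PosEquiv w (u ++ i :: i :: v)

namespace ExposesClasp

variable {w w' : List ℕ}

theorem of_posEquiv (h : PosEquiv w w') : ExposesClasp w' → ExposesClasp w
  | ⟨u, v, i, h'⟩ => ⟨u, v, i, h.trans h'⟩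

theorem append_left (a : List ℕ) : ExposesClasp w → ExposesClasp (a ++ w)
  | ⟨u, v, i, h⟩ => ⟨a ++ u, v, i, by simpa only [List.append_assoc] using h.append_left a⟩

theorem append_right (b : List ℕ) : ExposesClasp w → ExposesClasp (w ++ b)
  | ⟨u, v, i, h⟩ =>
    ⟨u, v ++ b, i, by simpa only [List.append_assoc, List.cons_append] using h.append_right b⟩

end ExposesClasp

/-- The word `[m - 1, m - 2, …, k]`, which carries the strand in position `m` to position `k`
past all strands in between; it is empty when `m ≤ k`. As for `List.Ico`, the bound `m` is
excluded. -/
def descendingRun (k m : ℕ) : List ℕ :=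
  (List.Ico k m).reverse

section DescendingRun

variable {j k m : ℕ}

theorem mem_descendingRun {i : ℕ} : i ∈ descendingRun k m ↔ k ≤ i ∧ i < m := by
  rw [descendingRun, List.mem_reverse, List.Ico.mem]

theorem descendingRun_eq_nil (h : m ≤ k) : descendingRun k m = [] := by
  rw [descendingRun, List.Ico.eq_nil_of_le h, List.reverse_nil]

theorem descendingRun_eq_append_cons (hkj : k ≤ j) (hjm : j < m) :
    descendingRun k m = descendingRun (j + 1) m ++ j :: descendingRun k j := by
  simp only [descendingRun]
  rw [← List.Ico.append_consecutive hkj hjm.le, List.Ico.eq_cons hjm, List.reverse_append,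
    List.reverse_cons, List.append_assoc, List.singleton_append]

theorem descendingRun_succ (h : k ≤ m) : descendingRun k (m + 1) = m :: descendingRun k m := by
  rw [descendingRun_eq_append_cons h m.lt_succ_self, descendingRun_eq_nil le_rfl,
    List.nil_append]

theorem descendingRun_eq_append_singleton (h : k < m) :
    descendingRun k m = descendingRun (k + 1) m ++ [k] := by
  rw [descendingRun_eq_append_cons le_rfl h, descendingRun_eq_nil (le_refl k)]

theorem PosEquiv.descendingRun_append_succ (hkj : k ≤ j) (hjm : j + 1 < m) :
    PosEquiv (descendingRun k m ++ [j + 1]) (j :: descendingRun k m) := by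
  have hsplit : descendingRun k m =
      descendingRun (j + 2) m ++ (j + 1) :: j :: descendingRun k j := by
    rw [descendingRun_eq_append_cons (by omega) hjm, descendingRun_succ hkj]
  have hlow : PosEquiv (descendingRun k j ++ [j + 1]) ((j + 1) :: descendingRun k j) :=
    append_singleton_of_far fun i hi => by rw [mem_descendingRun] at hi; omega
  have hhigh : PosEquiv (descendingRun (j + 2) m ++ [j]) (j :: descendingRun (j + 2) m) :=
    append_singleton_of_far fun i hi => by rw [mem_descendingRun] at hi; omega
  calc descendingRun k m ++ [j + 1]
    _ = descendingRun (j + 2) m ++ [j + 1, j] ++ (descendingRun k j ++ [j + 1]) := by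
      simp [hsplit]
    PosEquiv _ (descendingRun (j + 2) m ++ [j + 1, j] ++ (j + 1) :: descendingRun k j) :=
      hlow.append_left _
    _ = descendingRun (j + 2) m ++ (j + 1) :: j :: (j + 1) :: descendingRun k j := by simp
    PosEquiv _ (descendingRun (j + 2) m ++ j :: (j + 1) :: j :: descendingRun k j) :=
      .single (.braid_inv _ _ j)
    _ = descendingRun (j + 2) m ++ [j] ++ (j + 1) :: j :: descendingRun k j := by simp
    PosEquiv _ (j :: descendingRun (j + 2) m ++ (j + 1) :: j :: descendingRun k j) :=
      hhigh.append_right _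
    _ = j :: descendingRun k m := by simp [hsplit]

theorem exposesClasp_or_posEquiv_descendingRun_append (hk : k ≤ m + 1) (hj : j < m + 1) :
    ExposesClasp (descendingRun k (m + 1) ++ [j]) ∨
      ∃ u l, l ≤ m + 1 ∧ (∀ i ∈ u, i < m) ∧
        PosEquiv (descendingRun k (m + 1) ++ [j]) (u ++ descendingRun l (m + 1)) := by
  rcases lt_trichotomy j k with hjk | rfl | hkj
  · rcases Nat.eq_or_lt_of_le hjk with rfl | hfar
    · rw [← descendingRun_eq_append_singleton hj]
      exact .inr ⟨[], j, hj.le, by simp, .refl⟩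
    · refine .inr ⟨[j], k, hk, by simpa using by omega, ?_⟩
      exact PosEquiv.append_singleton_of_far fun i hi => by rw [mem_descendingRun] at hi; omega
  · rw [descendingRun_eq_append_singleton hj]
    exact .inl ⟨descendingRun (j + 1) (m + 1), [], j, by simpa using .refl⟩
  · obtain ⟨j, rfl⟩ := Nat.exists_eq_succ_of_ne_zero (Nat.ne_zero_of_lt hkj)
    exact .inr ⟨[j], k, hk, by simpa using Nat.lt_of_succ_lt_succ hj,
      .descendingRun_append_succ (Nat.le_of_lt_succ hkj) hj⟩

theorem exposesClasp_or_posEquiv_append_descendingRun {w : List ℕ} (hw : ∀ i ∈ w, i < m + 1) :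
    ExposesClasp w ∨
      ∃ u k, k ≤ m + 1 ∧ (∀ i ∈ u, i < m) ∧ PosEquiv w (u ++ descendingRun k (m + 1)) := by
  induction w using List.reverseRecOn with
  | nil => exact .inr ⟨[], m + 1, le_rfl, by simp, by rw [descendingRun_eq_nil le_rfl]; exact .refl⟩
  | append_singleton w j ih =>
    obtain ⟨hw, hj⟩ := List.forall_mem_append.1 hw
    rcases ih hw with hclasp | ⟨u, k, hk, hu, h⟩
    · exact .inl (hclasp.append_right [j])
    have hstep : PosEquiv (w ++ [j]) (u ++ (descendingRun k (m + 1) ++ [j])) := by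
      simpa only [List.append_assoc] using h.append_right [j]
    rcases exposesClasp_or_posEquiv_descendingRun_append hk (hj j (List.mem_singleton_self j)) with
      hclasp | ⟨v, l, hl, hv, h'⟩
    · exact .inl (.of_posEquiv hstep (hclasp.append_left u))
    · refine .inr ⟨u ++ v, l, hl, List.forall_mem_append.2 ⟨hu, hv⟩, ?_⟩
      simpa only [List.append_assoc] using hstep.trans (h'.append_left u)

theorem colorAfter_descendingRun_top (γ : ℕ → ℕ) (h : k ≤ m) :
    colorAfter γ (descendingRun k (m + 1)) (m + 1) = γ m := by
  rw [descendingRun_succ h, colorAfter, colorAfter_apply_of_untouched, Equiv.swap_apply_right]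
  intro i hi
  rw [mem_descendingRun] at hi
  omega

theorem colorAfter_append_descendingRun_top_ne {γ : ℕ → ℕ} {u : List ℕ} (hu : ∀ i ∈ u, i < m)
    (hk : k ≤ m) (huni : NoUnicolored γ (u ++ descendingRun k (m + 1))) :
    colorAfter γ (u ++ descendingRun k (m + 1)) (m + 1) ≠ γ (m + 1) := by
  have hfix : colorAfter γ u (m + 1) = γ (m + 1) :=
    colorAfter_apply_of_untouched γ fun i hi => by have := hu i hi; omega
  rw [descendingRun_succ hk, noUnicolored_append] at huni
  rw [colorAfter_append, colorAfter_descendingRun_top _ hk, ← hfix]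
  exact huni.2.1

end DescendingRun

theorem exposesClasp_of_colorPure {w : List ℕ} (hne : w ≠ []) {γ : ℕ → ℕ}
    (huni : NoUnicolored γ w) (hpure : colorAfter γ w = γ) : ExposesClasp w := by
  obtain ⟨m, hm⟩ : ∃ m, ∀ i ∈ w, i < m :=
    ⟨w.sum + 1, fun i hi => Nat.lt_succ_of_le (List.le_sum_of_mem hi)⟩
  induction m generalizing w with
  | zero =>
    exact absurd (List.eq_nil_iff_forall_not_mem.2 fun i hi => Nat.not_lt_zero i (hm i hi)) hne
  | succ m ih =>
    rcases exposesClasp_or_posEquiv_append_descendingRun hm with hclasp | ⟨u, k, hk, hu, h⟩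
    · exact hclasp
    have huni' := (h.noUnicolored_iff γ).2 huni
    have hpure' := (h.colorAfter_eq γ).trans hpure
    rcases Nat.le_or_eq_of_le_succ hk with hkm | rfl
    · exact absurd (congrFun hpure' (m + 1)) (colorAfter_append_descendingRun_top_ne hu hkm huni')
    · rw [descendingRun_eq_nil le_rfl, List.append_nil] at h huni' hpure'
      have hune : u ≠ [] := by
        rintro rfl
        exact hne (List.eq_nil_iff_forall_not_mem.2 fun i hi =>
          List.not_mem_nil ((h.mem_iff i).2 hi))
      exact .of_posEquiv h (ih hune huni' hpure' hu)

/-- Lemma 3.3.  Any nonempty positive braid word `w` on `n` strands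
that is color-pure with respect to a coloring `γ` and has no uni-colored crossings is
positively equivalent to a positive braid word `w'` containing a clasp, i.e. two equal
consecutive letters `[i, i]` for some `i ∈ {1, …, n−1}`; moreover `w'` is again
color-pure with respect to `γ`. -/
theorem colorPure_posEquiv_clasp (n : ℕ) (hn : 1 ≤ n) (w : List ℕ) (hne : w ≠ [])
    (hw : ∀ i ∈ w, 1 ≤ i ∧ i < n) (γ : ℕ → ℕ)
    (huni : NoUnicolored γ w) (hpure : colorAfter γ w = γ) :
    ∃ w' : List ℕ, PosEquiv w w' ∧ (∀ i ∈ w', 1 ≤ i ∧ i < n) ∧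
      (∃ (u v : List ℕ) (i : ℕ), w' = u ++ i :: i :: v ∧ 1 ≤ i ∧ i < n) ∧
      colorAfter γ w' = γ := by
  obtain ⟨u, v, i, h⟩ := exposesClasp_of_colorPure hne huni hpure
  have hletters : ∀ j ∈ u ++ i :: i :: v, 1 ≤ j ∧ j < n := fun j hj => hw j ((h.mem_iff j).1 hj)
  exact ⟨u ++ i :: i :: v, h, hletters, ⟨u, v, i, rfl, hletters i (by simp)⟩,
    (h.colorAfter_eq γ).trans hpure⟩
end
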